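/- arXiv:2506.07420 — 4 statements merged into one kernel-verified Lean document; each statement's English description precedes it below -/
import Mathlib

section
/- Let p be a prime and let c ∈ ℤ_p^× with c ≠ 1 and c ≠ −1. For each integer n ≥ 1 set M_n := (1 − c^n)·(1 − p^{n−1})·(−B_n/n), an element of ℚ_p (the product of the p-adic integer 1 − c^n with the rational number (1 − p^{n−1})(−B_n/n)). Then there exists M_0 ∈ ℤ_p such that for every polynomial f(r) = ∑_{n=0}^N a_n r^n with rational coefficients satisfying f(x) ∈ ℤ_p for every x ∈ ℤ_p^×, the sum ∑_{n=0}^N a_n·M_n, computed in ℚ_p, lies in ℤ_p. In particular each M_n with n ≥ 1 lies in ℤ_p. -/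
/-!
Fix a level `N`. Multiplication by `c` permutes the units modulo `p ^ N`, so each representative
`b` of a unit class satisfies `c * a = b + p ^ N * q` for a unique representative `a` and some
`q ∈ ℤ_p`. Placing the mass `q / b` at `b` gives a functional of norm at most `1` on
`C(ℤ_pˣ, ℚ_p)`. Taking `n`-th powers and summing over `b`, this functional integrates `x ^ n` to
`(c ^ n - 1) / n * ∑ b ^ n / p ^ N` modulo `p ^ N / n`, and by Faulhaber's formula
`∑ b ^ n / p ^ N` tends to `(1 - p ^ (n - 1)) * B_n`. By Banach–Alaoglu the functionals have a
weak-* cluster point; its norm is at most `1`, and its moments for `n ≥ 1` are the limits above.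
-/

open Filter Finset Topology

namespace MazurMeasure

section PowerSums

theorem tendsto_sum_range_pow_div {K ι : Type*} [NontriviallyNormedField K] [CharZero K]
    {l : Filter ι} {u : ι → ℕ} (hu : Tendsto (fun i => (u i : K)) l (𝓝[≠] 0)) (n : ℕ) :
    Tendsto (fun i => (∑ k ∈ range (u i), (k : K) ^ n) / u i) l (𝓝 (bernoulli n : K)) := by
  have hn : (n + 1 : K) ≠ 0 := n.cast_add_one_ne_zero
  have hderiv := (Polynomial.bernoulli (n + 1)).hasDerivAt_aeval (0 : K)
  have hlim := (hasDerivAt_iff_tendsto_slope.mp hderiv).comp hu |>.const_mul (n + 1 : K)⁻¹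
  have hzero (q : Polynomial ℚ) : Polynomial.aeval (0 : K) q = (q.eval 0 : ℚ) := by
    simpa using Polynomial.aeval_algebraMap_apply K (0 : ℚ) q
  have hsum (m : ℕ) : (n + 1 : K) * ∑ k ∈ range m, (k : K) ^ n =
      Polynomial.aeval (m : K) (Polynomial.bernoulli (n + 1)) - (bernoulli (n + 1) : K) := by
    have hcast := Polynomial.aeval_algebraMap_apply K (m : ℚ) (Polynomial.bernoulli (n + 1))
    rw [map_natCast, Polynomial.coe_aeval_eq_eval, eq_ratCast] at hcast
    rw [hcast]
    exact_mod_cast congrArg (Rat.cast : ℚ → K) (Polynomial.sum_range_pow_eq_bernoulli_sub m n)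
  convert hlim using 2 with i
  · rw [Function.comp_apply, slope_def_field, hzero, Polynomial.bernoulli_eval_zero, ← hsum,
      sub_zero, ← mul_div_assoc, inv_mul_cancel_left₀ hn]
  · rw [Polynomial.derivative_bernoulli_add_one, hzero, Polynomial.eval_mul,
      Polynomial.bernoulli_eval_zero]
    simp [hn]

theorem sum_units_zmod_val {M : Type*} [AddCommMonoid M] (m : ℕ) [NeZero m] (f : ℕ → M) :
    ∑ a : (ZMod m)ˣ, f (a : ZMod m).val = ∑ k ∈ range m with k.Coprime m, f k := by
  refine sum_bij (fun a _ => (a : ZMod m).val) (fun a _ => ?_) (fun a _ b _ hab => ?_)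
    (fun k hk => ?_) (fun _ _ => rfl)
  · exact mem_filter.mpr ⟨mem_range.mpr (ZMod.val_lt _), ZMod.val_coe_unit_coprime a⟩
  · exact Units.ext (ZMod.val_injective m hab)
  · obtain ⟨hlt, hcop⟩ := mem_filter.mp hk
    exact ⟨ZMod.unitOfCoprime k hcop, mem_univ _, ZMod.val_cast_of_lt (mem_range.mp hlt)⟩

theorem sum_range_mul_filter_dvd {M : Type*} [AddCommMonoid M] {d : ℕ} (hd : 0 < d) (m : ℕ)
    (f : ℕ → M) : ∑ k ∈ range (d * m) with d ∣ k, f k = ∑ k ∈ range m, f (d * k) := by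
  have himage : {k ∈ range (d * m) | d ∣ k} = (range m).image (d * ·) := by
    ext k
    simp only [mem_filter, mem_range, mem_image]
    constructor
    · rintro ⟨hlt, j, rfl⟩
      exact ⟨j, lt_of_mul_lt_mul_left' hlt, rfl⟩
    · rintro ⟨j, hj, rfl⟩
      exact ⟨Nat.mul_lt_mul_of_pos_left hj hd, dvd_mul_right d j⟩
  rw [himage, sum_image fun _ _ _ _ => Nat.eq_of_mul_eq_mul_left hd]

theorem sum_units_zmod_prime_pow_add {M : Type*} [AddCommMonoid M] {p : ℕ} [hp : Fact p.Prime]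
    (N : ℕ) (f : ℕ → M) :
    ∑ a : (ZMod (p ^ (N + 1)))ˣ, f (a : ZMod (p ^ (N + 1))).val +
      ∑ k ∈ range (p ^ N), f (p * k) = ∑ k ∈ range (p ^ (N + 1)), f k := by
  have hcop (k : ℕ) : k.Coprime (p ^ (N + 1)) ↔ ¬ p ∣ k := by
    rw [Nat.coprime_pow_right_iff N.succ_pos, Nat.coprime_comm, hp.out.coprime_iff_not_dvd]
  simp only [sum_units_zmod_val, hcop]
  rw [← sum_range_mul_filter_dvd hp.out.pos, ← pow_succ', add_comm,
    sum_filter_add_sum_filter_not]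

variable {p : ℕ} [Fact p.Prime]

theorem tendsto_natCast_prime_pow :
    Tendsto (fun N : ℕ => ((p ^ N : ℕ) : ℚ_[p])) atTop (𝓝[≠] 0) := by
  refine tendsto_nhdsWithin_iff.mpr ⟨?_, .of_forall fun N => ?_⟩
  · simpa using tendsto_pow_atTop_nhds_zero_of_norm_lt_one (Padic.norm_p_lt_one (p := p))
  · exact Nat.cast_ne_zero.mpr (pow_ne_zero N (Fact.out : p.Prime).ne_zero)

theorem tendsto_sum_units_zmod_pow_div (n : ℕ) :
    Tendsto (fun N : ℕ => (∑ a : (ZMod (p ^ (N + 1)))ˣ,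
        ((a : ZMod (p ^ (N + 1))).val : ℚ_[p]) ^ n) / (p : ℚ_[p]) ^ (N + 1))
      atTop (𝓝 ((1 - (p : ℚ_[p]) ^ n / p) * (bernoulli n : ℚ_[p]))) := by
  have hp : (p : ℚ_[p]) ≠ 0 := mod_cast (Fact.out : p.Prime).ne_zero
  have hlim := tendsto_sum_range_pow_div (tendsto_natCast_prime_pow (p := p)) n
  rw [sub_mul, one_mul]
  refine ((hlim.comp (tendsto_add_atTop_nat 1)).sub (hlim.const_mul _)).congr fun N => ?_
  have hsplit := sum_units_zmod_prime_pow_add (p := p) N fun k => (k : ℚ_[p]) ^ n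
  simp only [Nat.cast_mul, mul_pow, ← mul_sum] at hsplit
  simp only [Function.comp_apply, ← hsplit]
  push_cast
  field_simp
  ring

end PowerSums

section RiemannSums

variable {p : ℕ} [Fact p.Prime]

/-- The representative in `[0, p ^ (N + 1))` of a unit modulo `p ^ (N + 1)`, as a unit of `ℤ_p`;
it is the sample point of that residue class in the Riemann sums below. The levels start at
`p ^ 1` because the representative `0` modulo `p ^ 0` is not a unit. -/
noncomputable def unitRep {N : ℕ} (a : (ZMod (p ^ (N + 1)))ˣ) : ℤ_[p]ˣ :=
  PadicInt.mkUnits (u := ((a : ZMod (p ^ (N + 1))).val : ℚ_[p])) <|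
    Padic.norm_natCast_eq_one_iff.mpr <|
      ((ZMod.val_coe_unit_coprime a).coprime_dvd_right (dvd_pow_self p N.succ_ne_zero)).symm

theorem coe_unitRep {N : ℕ} (a : (ZMod (p ^ (N + 1)))ˣ) :
    (unitRep a : ℤ_[p]) = (a : ZMod (p ^ (N + 1))).val :=
  PadicInt.ext (PadicInt.coe_natCast _).symm

theorem toZModPow_unitRep {N : ℕ} (a : (ZMod (p ^ (N + 1)))ˣ) :
    PadicInt.toZModPow (N + 1) (unitRep a : ℤ_[p]) = a := by
  rw [coe_unitRep, map_natCast, ZMod.natCast_zmod_val]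

theorem norm_sub_le_of_toZModPow_eq {N : ℕ} {x y : ℤ_[p]}
    (h : PadicInt.toZModPow N x = PadicInt.toZModPow N y) : ‖x - y‖ ≤ ‖(p : ℚ_[p]) ^ N‖ := by
  rw [Padic.norm_p_pow, PadicInt.norm_le_pow_iff_mem_span_pow, ← PadicInt.ker_toZModPow]
  exact (RingHom.sub_mem_ker_iff _).mpr h

/-- The reduction of `c` modulo `p ^ N`, through which `c` permutes the residue classes. -/
noncomputable def unitRed (N : ℕ) (c : ℤ_[p]ˣ) : (ZMod (p ^ N))ˣ :=
  Units.map (PadicInt.toZModPow (p := p) N).toMonoidHom c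

/-- The multiple by `c` of the representative which lands in the class of `b`. -/
noncomputable def dilatedRep (c : ℤ_[p]ˣ) {N : ℕ} (b : (ZMod (p ^ (N + 1)))ˣ) : ℤ_[p]ˣ :=
  c * unitRep ((unitRed (N + 1) c)⁻¹ * b)

theorem sum_dilatedRep_pow (c : ℤ_[p]ˣ) (N n : ℕ) :
    ∑ b : (ZMod (p ^ (N + 1)))ˣ, (dilatedRep c b : ℤ_[p]) ^ n =
      (c : ℤ_[p]) ^ n * ∑ b : (ZMod (p ^ (N + 1)))ˣ, (unitRep b : ℤ_[p]) ^ n := by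
  simp only [dilatedRep, Units.val_mul, mul_pow, ← mul_sum]
  exact congrArg _ <|
    Equiv.sum_comp (Equiv.mulLeft (unitRed (N + 1) c)⁻¹) fun b => (unitRep b : ℤ_[p]) ^ n

theorem norm_dilatedRep_sub_unitRep_le (c : ℤ_[p]ˣ) {N : ℕ} (b : (ZMod (p ^ (N + 1)))ˣ) :
    ‖(dilatedRep c b - unitRep b : ℤ_[p])‖ ≤ ‖(p : ℚ_[p]) ^ (N + 1)‖ := by
  refine norm_sub_le_of_toZModPow_eq ?_
  rw [dilatedRep, Units.val_mul, map_mul, toZModPow_unitRep, toZModPow_unitRep]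
  exact congrArg Units.val (mul_inv_cancel_left (unitRed (N + 1) c) b)

/-- The mass of the residue class of `b` at level `p ^ (N + 1)`: in the notation of the header,
`q / b` with `c * a = b + p ^ (N + 1) * q`. -/
noncomputable def weight (c : ℤ_[p]ˣ) {N : ℕ} (b : (ZMod (p ^ (N + 1)))ˣ) : ℚ_[p] :=
  ((dilatedRep c b - unitRep b : ℤ_[p]) : ℚ_[p]) / ((p : ℚ_[p]) ^ (N + 1) * (unitRep b : ℤ_[p]))

theorem norm_weight_le_one (c : ℤ_[p]ˣ) {N : ℕ} (b : (ZMod (p ^ (N + 1)))ˣ) :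
    ‖weight c b‖ ≤ 1 := by
  rw [weight, norm_div, norm_mul, ← PadicInt.norm_def, ← PadicInt.norm_def, PadicInt.norm_units,
    mul_one]
  exact div_le_one_of_le₀ (norm_dilatedRep_sub_unitRep_le c b) (norm_nonneg _)

/-- The approximation at level `p ^ (N + 1)` to the Mazur measure: the sum of the point masses
`weight c b` at the representatives of the unit classes. -/
noncomputable def riemannSum (c : ℤ_[p]ˣ) (N : ℕ) : C(ℤ_[p]ˣ, ℚ_[p]) →L[ℚ_[p]] ℚ_[p] :=
  ∑ b : (ZMod (p ^ (N + 1)))ˣ, weight c b • ContinuousMap.evalCLM ℚ_[p] (unitRep b)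

theorem riemannSum_apply (c : ℤ_[p]ˣ) (N : ℕ) (g : C(ℤ_[p]ˣ, ℚ_[p])) :
    riemannSum c N g = ∑ b : (ZMod (p ^ (N + 1)))ˣ, weight c b * g (unitRep b) := by
  simp [riemannSum]

theorem norm_riemannSum_le_one (c : ℤ_[p]ˣ) (N : ℕ) : ‖riemannSum c N‖ ≤ 1 := by
  refine ContinuousLinearMap.opNorm_le_bound _ zero_le_one fun g => ?_
  rw [riemannSum_apply, one_mul]
  refine IsUltrametricDist.norm_sum_le_of_forall_le_of_nonneg (norm_nonneg g) fun b _ => ?_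
  rw [norm_mul]
  exact (mul_le_of_le_one_left (norm_nonneg _) (norm_weight_le_one c b)).trans
    (g.norm_coe_le_norm _)

end RiemannSums

section Moments

variable {p : ℕ} [Fact p.Prime]

variable (p) in
/-- The inclusion of `ℤ_pˣ` in `ℚ_p` as a continuous function; its powers are the functions whose
integrals are the moments of a measure on `ℤ_pˣ`. -/
def unitsVal : C(ℤ_[p]ˣ, ℚ_[p]) where
  toFun x := (x : ℤ_[p])
  continuous_toFun := continuous_subtype_val.comp (Units.continuous_val (M := ℤ_[p]))

@[simp]
theorem unitsVal_apply (x : ℤ_[p]ˣ) : unitsVal p x = (x : ℤ_[p]) := rfl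

theorem norm_unitsVal_pow_le_one (n : ℕ) : ‖unitsVal p ^ n‖ ≤ 1 :=
  (ContinuousMap.norm_le _ zero_le_one).mpr fun x => by simp

theorem norm_pow_sub_pow_sub_le (x y : ℤ_[p]) (n : ℕ) :
    ‖y ^ n - x ^ n - n * x ^ (n - 1) * (y - x)‖ ≤ ‖y - x‖ ^ 2 := by
  obtain ⟨k, hk⟩ := Polynomial.powAddExpansion x (y - x) n
  rw [add_sub_cancel] at hk
  have hremainder : y ^ n - x ^ n - n * x ^ (n - 1) * (y - x) = k * (y - x) ^ 2 := by
    rw [hk]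
    ring
  rw [hremainder, norm_mul, norm_pow]
  exact mul_le_of_le_one_left (by positivity) k.norm_le_one

theorem mul_weight_mul_unitRep_pow (c : ℤ_[p]ˣ) {N : ℕ} (b : (ZMod (p ^ (N + 1)))ˣ) (n : ℕ) :
    (p : ℚ_[p]) ^ (N + 1) * (n * (weight c b * ((unitRep b : ℤ_[p]) : ℚ_[p]) ^ n)) =
      ((n * (unitRep b : ℤ_[p]) ^ (n - 1) * (dilatedRep c b - unitRep b) : ℤ_[p]) : ℚ_[p]) := by
  have hp : (p : ℚ_[p]) ≠ 0 := mod_cast (Fact.out : p.Prime).ne_zero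
  have hb : ((unitRep b : ℤ_[p]) : ℚ_[p]) ≠ 0 := PadicInt.coe_ne_zero.mpr (unitRep b).ne_zero
  cases n with
  | zero => simp
  | succ n =>
    rw [weight]
    push_cast
    field_simp
    ring

theorem norm_sum_pow_div_sub_riemannSum_le (c : ℤ_[p]ˣ) (N n : ℕ) :
    ‖(((c : ℤ_[p]) : ℚ_[p]) ^ n - 1) * ((∑ b : (ZMod (p ^ (N + 1)))ˣ,
        ((b : ZMod (p ^ (N + 1))).val : ℚ_[p]) ^ n) / (p : ℚ_[p]) ^ (N + 1)) -
      n * riemannSum c N (unitsVal p ^ n)‖ ≤ ‖(p : ℚ_[p]) ^ (N + 1)‖ := by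
  have hp : (p : ℚ_[p]) ^ (N + 1) ≠ 0 :=
    pow_ne_zero _ (mod_cast (Fact.out : p.Prime).ne_zero)
  set S := ∑ b : (ZMod (p ^ (N + 1)))ˣ, ((b : ZMod (p ^ (N + 1))).val : ℚ_[p]) ^ n with hS
  let remainder (b : (ZMod (p ^ (N + 1)))ˣ) : ℤ_[p] := (dilatedRep c b : ℤ_[p]) ^ n -
    (unitRep b : ℤ_[p]) ^ n - n * (unitRep b : ℤ_[p]) ^ (n - 1) * (dilatedRep c b - unitRep b)
  have hbound : ‖∑ b, remainder b‖ ≤ ‖(p : ℚ_[p]) ^ (N + 1)‖ ^ 2 :=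
    IsUltrametricDist.norm_sum_le_of_forall_le_of_nonneg (by positivity) fun b _ =>
      (norm_pow_sub_pow_sub_le _ _ n).trans <|
        pow_le_pow_left₀ (norm_nonneg _) (norm_dilatedRep_sub_unitRep_le c b) 2
  have hsum : ((∑ b, remainder b : ℤ_[p]) : ℚ_[p]) = (p : ℚ_[p]) ^ (N + 1) *
      ((((c : ℤ_[p]) : ℚ_[p]) ^ n - 1) * (S / (p : ℚ_[p]) ^ (N + 1)) -
        n * riemannSum c N (unitsVal p ^ n)) := by
    have hreps : ((∑ b : (ZMod (p ^ (N + 1)))ˣ, (unitRep b : ℤ_[p]) ^ n : ℤ_[p]) : ℚ_[p]) = S := by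
      simp only [coe_unitRep, hS]
      push_cast [PadicInt.coe_sum]
      rfl
    have hlinear : ((∑ b : (ZMod (p ^ (N + 1)))ˣ, n * (unitRep b : ℤ_[p]) ^ (n - 1) *
        (dilatedRep c b - unitRep b) : ℤ_[p]) : ℚ_[p]) =
        (p : ℚ_[p]) ^ (N + 1) * (n * riemannSum c N (unitsVal p ^ n)) := by
      simp only [PadicInt.coe_sum, ← mul_weight_mul_unitRep_pow, riemannSum_apply, mul_sum,
        ContinuousMap.pow_apply, unitsVal_apply]
    simp only [remainder, sum_sub_distrib, sum_dilatedRep_pow, PadicInt.coe_sub, hlinear,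
      PadicInt.coe_mul, PadicInt.coe_pow, hreps]
    field_simp
  rw [PadicInt.norm_def, hsum, norm_mul, sq] at hbound
  exact le_of_mul_le_mul_left hbound (norm_pos_iff.mpr hp)

theorem tendsto_riemannSum_unitsVal_pow (c : ℤ_[p]ˣ) {n : ℕ} (hn : 1 ≤ n) :
    Tendsto (fun N => riemannSum c N (unitsVal p ^ n)) atTop
      (𝓝 (((1 - (c : ℤ_[p]) ^ n : ℤ_[p]) : ℚ_[p]) *
        ((((1 - (p : ℚ) ^ (n - 1)) * (-(bernoulli n) / (n : ℚ))) : ℚ) : ℚ_[p]))) := by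
  have hn0 : (n : ℚ_[p]) ≠ 0 := mod_cast (by lia : n ≠ 0)
  have hp : (p : ℚ_[p]) ≠ 0 := mod_cast (Fact.out : p.Prime).ne_zero
  have herror := squeeze_zero_norm (norm_sum_pow_div_sub_riemannSum_le c · n) <| by
    simpa using (((tendsto_natCast_prime_pow (p := p)).mono_right nhdsWithin_le_nhds).comp
      (tendsto_add_atTop_nat 1)).norm
  have hmain := (tendsto_sum_units_zmod_pow_div (p := p) n).const_mul
    (((c : ℤ_[p]) : ℚ_[p]) ^ n - 1)
  convert (hmain.sub herror).const_mul (n : ℚ_[p])⁻¹ using 2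
  · field_simp
    ring
  · rw [← pow_sub_one_mul (by lia : n ≠ 0) (p : ℚ_[p])]
    push_cast
    field_simp
    ring

end Moments

section Duality

theorem exists_strongDual_apply_eq_of_tendsto {𝕜 E ι : Type*} [NontriviallyNormedField 𝕜]
    [ProperSpace 𝕜] [SeminormedAddCommGroup E] [NormedSpace 𝕜 E] {l : Filter ι} [l.NeBot]
    {φ : ι → StrongDual 𝕜 E} {r : ℝ} (hφ : ∀ i, ‖φ i‖ ≤ r) :
    ∃ ψ : StrongDual 𝕜 E, ‖ψ‖ ≤ r ∧ ∀ x y, Tendsto (φ · x) l (𝓝 y) → ψ x = y := by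
  obtain ⟨ψ, hψ, hcluster⟩ := (WeakDual.isCompact_closedBall (𝕜 := 𝕜) (E := E) 0 r)
    |>.exists_mapClusterPt (f := l) (u := fun i => StrongDual.toWeakDual (φ i)) <|
      tendsto_principal.mpr <| .of_forall fun i => by simpa using hφ i
  refine ⟨WeakDual.toStrongDual ψ, by simpa using hψ, fun x y hy => ?_⟩
  have heval : MapClusterPt (ψ x) l (φ · x) :=
    hcluster.continuousAt_comp (WeakDual.eval_continuous x).continuousAt
  exact eq_of_nhds_neBot (heval.clusterPt.mono hy)

variable {p : ℕ} [Fact p.Prime]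

theorem norm_sum_coeff_mul_moment_le_one {μ : C(ℤ_[p]ˣ, ℚ_[p]) →L[ℚ_[p]] ℚ_[p]} (hμ : ‖μ‖ ≤ 1)
    {f : Polynomial ℚ} (hf : ∀ x : ℤ_[p]ˣ, ‖Polynomial.aeval ((x : ℤ_[p]) : ℚ_[p]) f‖ ≤ 1) :
    ‖∑ n ∈ f.support, ((f.coeff n : ℚ) : ℚ_[p]) * μ (unitsVal p ^ n)‖ ≤ 1 := by
  let g : C(ℤ_[p]ˣ, ℚ_[p]) := ∑ n ∈ f.support, (f.coeff n : ℚ_[p]) • unitsVal p ^ n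
  have hg : ‖g‖ ≤ 1 := (ContinuousMap.norm_le _ zero_le_one).mpr fun x => by
    simpa [g, Polynomial.aeval_def, Polynomial.eval₂_eq_sum, Polynomial.sum] using hf x
  simpa [g] using μ.le_of_opNorm_le_of_le hμ hg

end Duality

end MazurMeasure

open MazurMeasure

theorem mazur_measure_moments_general {p : ℕ} [Fact p.Prime] (c : ℤ_[p]ˣ) :
    ∃ μ : C(ℤ_[p]ˣ, ℚ_[p]) →L[ℚ_[p]] ℚ_[p], ‖μ‖ ≤ 1 ∧
      ∀ n : ℕ, 1 ≤ n → μ (unitsVal p ^ n) = ((1 - (c : ℤ_[p]) ^ n : ℤ_[p]) : ℚ_[p]) *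
        ((((1 - (p : ℚ) ^ (n - 1)) * (-(bernoulli n) / (n : ℚ))) : ℚ) : ℚ_[p]) := by
  obtain ⟨μ, hμ, hlim⟩ :=
    exists_strongDual_apply_eq_of_tendsto (l := atTop) (norm_riemannSum_le_one c)
  exact ⟨μ, hμ, fun n hn => hlim _ _ (tendsto_riemannSum_unitsVal_pow c hn)⟩

/-- the Mazur measure.  For a prime `p` and `c ∈ ℤ_p^×` with `c ≠ ±1`, the
sequence with `n`-th term `(1 − cⁿ)·(1 − p^{n−1})·(−Bₙ/n)` (for `n ≥ 1`) extends by some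
`0`-th term `M 0 ∈ ℤ_p` to a sequence `(M n)` of `p`-adic numbers such that for every
rational polynomial `f = ∑ aₙ rⁿ` with `f(ℤ_p^×) ⊆ ℤ_p`, the sum `∑ aₙ · M n` lies in
`ℤ_p`; in particular each `M n` with `n ≥ 1` lies in `ℤ_p`. -/
theorem mazur_measure_moments (p : ℕ) [Fact p.Prime] (c : ℤ_[p]ˣ)
    (hc1 : (c : ℤ_[p]) ≠ 1) (hc2 : (c : ℤ_[p]) ≠ -1) :
    ∃ M : ℕ → ℚ_[p], ‖M 0‖ ≤ 1 ∧
      (∀ n : ℕ, 1 ≤ n →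
        M n = ((1 - (c : ℤ_[p]) ^ n : ℤ_[p]) : ℚ_[p]) *
          ((((1 - (p : ℚ) ^ (n - 1)) * (-(bernoulli n) / (n : ℚ))) : ℚ) : ℚ_[p])) ∧
      (∀ f : Polynomial ℚ,
        (∀ x : ℤ_[p]ˣ, ‖Polynomial.aeval ((x : ℤ_[p]) : ℚ_[p]) f‖ ≤ 1) →
        ‖∑ n ∈ f.support, ((f.coeff n : ℚ) : ℚ_[p]) * M n‖ ≤ 1) ∧
      (∀ n : ℕ, 1 ≤ n → ‖M n‖ ≤ 1) := by
  obtain ⟨μ, hμ, hmoment⟩ := mazur_measure_moments_general c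
  have hle (n : ℕ) : ‖μ (unitsVal p ^ n)‖ ≤ 1 := by
    simpa using μ.le_of_opNorm_le_of_le hμ (norm_unitsVal_pow_le_one n)
  exact ⟨fun n => μ (unitsVal p ^ n), hle 0, hmoment,
    fun _ hf => norm_sum_coeff_mul_moment_le_one hμ hf, fun n _ => hle n⟩
end

section
/- Let p be an odd prime and let c ∈ ℤ_p^× with c ≠ 1 and c ≠ −1. If m, n ≥ 1 and i ≥ 0 are integers with m ≡ n modulo (p−1)p^i, then (1 − c^m)(1 − p^{m−1})·B_m/m − (1 − c^n)(1 − p^{n−1})·B_n/n lies in p^{i+1}·ℤ_p. -/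
/-! The regularized value `(1 - cᵏ)(1 - pᵏ⁻¹) Bₖ / k` is the `(k - 1)`-st moment over `ℤ_p^×` of a
measure with values in `ℤ_p`, the Mazur measure, and power functions `x ↦ x ^ (m - 1)` and
`x ↦ x ^ (n - 1)` with `m ≡ n` modulo `φ(pⁱ⁺¹)` agree modulo `pⁱ⁺¹` on `ℤ_p^×`.

To compute the moments, let `⟨v⟩` be the representative of `v` in `[0, pᴺ)`. The power sums
`∑ ⟨v⟩ᵏ` over the units `v` modulo `pᴺ`, divided by `pᴺ`, tend to `(1 - pᵏ⁻¹) Bₖ` by Faulhaber's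
formula. Multiplication by `c` permutes these units, and `⟨c v⟩ = c ⟨v⟩ + pᴺ w(v)` with
`w(v) ∈ ℤ_p`, so expanding the `k`-th power to first order in `pᴺ` gives
`(1 - cᵏ) ∑ ⟨v⟩ᵏ ≡ k pᴺ ∑ (c ⟨v⟩)ᵏ⁻¹ w(v)` modulo `p²ᴺ`. The sum on the right is a Riemann sum for
the moment. -/

open Filter Topology Finset
open scoped Nat

section PowerSums

lemma sum_range_pow_div_self {K : Type*} [Field K] [CharZero K] {n : ℕ} (hn : n ≠ 0) (k : ℕ) :
    (∑ a ∈ range n, (a : K) ^ k) / n =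
      ∑ j ∈ range (k + 1),
        ((bernoulli j : ℚ) : K) * (k + 1).choose j * (n : K) ^ (k - j) / (k + 1) := by
  have hfaulhaber := congrArg (fun q : ℚ => (q : K)) (sum_range_pow n k)
  push_cast at hfaulhaber
  rw [hfaulhaber, sum_div]
  refine sum_congr rfl fun j hj => ?_
  have hj : k + 1 - j = k - j + 1 := Nat.sub_add_comm (mem_range_succ_iff.1 hj)
  have hn : (n : K) ≠ 0 := Nat.cast_ne_zero.2 hn
  rw [hj, pow_succ]
  field_simp

lemma tendsto_sum_range_pow_div_self {K α : Type*} [Field K] [CharZero K] [TopologicalSpace K]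
    [IsTopologicalRing K] {l : Filter α} {f : α → ℕ} (hf : Tendsto (fun a => (f a : K)) l (𝓝 0))
    (hf0 : ∀ᶠ a in l, f a ≠ 0) (k : ℕ) :
    Tendsto (fun a => (∑ b ∈ range (f a), (b : K) ^ k) / f a) l (𝓝 ((bernoulli k : ℚ) : K)) := by
  let P : K → K := fun x => ∑ j ∈ range (k + 1),
    ((bernoulli j : ℚ) : K) * (k + 1).choose j * x ^ (k - j) / (k + 1)
  have hP : Continuous P := by fun_prop
  have hP0 : P 0 = ((bernoulli k : ℚ) : K) := by
    have hk : (k : K) + 1 ≠ 0 := Nat.cast_add_one_ne_zero k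
    have hlower : ∀ j ∈ range k,
        ((bernoulli j : ℚ) : K) * (k + 1).choose j * 0 ^ (k - j) / (k + 1) = 0 := fun j hj => by
      simp [Nat.sub_ne_zero_of_lt (mem_range.1 hj)]
    simp [P, sum_range_succ, sum_eq_zero hlower, hk]
  rw [← hP0]
  refine ((hP.tendsto 0).comp hf).congr' (hf0.mono fun a ha => ?_)
  exact (sum_range_pow_div_self ha k).symm

end PowerSums

section UnitSums

variable {M : Type*}

lemma sum_units_zmod_val [AddCommMonoid M] (n : ℕ) [NeZero n] (f : ℕ → M) :
    ∑ u : (ZMod n)ˣ, f (u : ZMod n).val = ∑ a ∈ range n with a.Coprime n, f a := by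
  refine sum_bij (fun u _ => (u : ZMod n).val) (fun u _ => ?_) (fun u _ v _ h => ?_)
    (fun a ha => ?_) (fun _ _ => rfl)
  · exact mem_filter.2 ⟨mem_range.2 (ZMod.val_lt _), ZMod.val_coe_unit_coprime u⟩
  · exact Units.ext (ZMod.val_injective n h)
  · obtain ⟨hlt, hcop⟩ := mem_filter.1 ha
    exact ⟨ZMod.unitOfCoprime a hcop, mem_univ _, by
      simp [ZMod.val_natCast, Nat.mod_eq_of_lt (mem_range.1 hlt)]⟩

lemma sum_range_mul_filter_dvd [AddCommMonoid M] {d : ℕ} (hd : 0 < d) (n : ℕ) (f : ℕ → M) :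
    ∑ a ∈ range (d * n) with d ∣ a, f a = ∑ a ∈ range n, f (d * a) := by
  have himage : {a ∈ range (d * n) | d ∣ a} = (range n).image (d * ·) := by
    ext b
    simp only [mem_filter, mem_range, mem_image]
    constructor
    · rintro ⟨hlt, a, rfl⟩
      exact ⟨a, lt_of_mul_lt_mul_left hlt d.zero_le, rfl⟩
    · rintro ⟨a, hlt, rfl⟩
      exact ⟨Nat.mul_lt_mul_of_pos_left hlt hd, dvd_mul_right d a⟩
  rw [himage, sum_image fun _ _ _ _ h => Nat.eq_of_mul_eq_mul_left hd h]

lemma sum_units_zmod_prime_pow_val [AddCommGroup M] {p : ℕ} [hp : Fact p.Prime] (N : ℕ)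
    (f : ℕ → M) :
    ∑ u : (ZMod (p ^ (N + 1)))ˣ, f (u : ZMod (p ^ (N + 1))).val =
      ∑ a ∈ range (p ^ (N + 1)), f a - ∑ a ∈ range (p ^ N), f (p * a) := by
  have hcoprime (a : ℕ) : a.Coprime (p ^ (N + 1)) ↔ ¬ p ∣ a := by
    rw [Nat.coprime_pow_right_iff N.succ_pos, Nat.coprime_comm, hp.out.coprime_iff_not_dvd]
  simp_rw [sum_units_zmod_val, hcoprime]
  rw [← sum_range_mul_filter_dvd hp.out.pos, ← pow_succ', eq_sub_iff_add_eq']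
  exact sum_filter_add_sum_filter_not _ _ _

end UnitSums

lemma sq_dvd_one_sub_pow_mul_sum_pow_sub {R ι : Type*} [CommRing R] [Fintype ι]
    (σ : Equiv.Perm ι) {x w : ι → R} {c d : R} (h : ∀ u, x (σ u) = c * x u + d * w u) (k : ℕ) :
    d ^ 2 ∣ (1 - c ^ k) * ∑ u, x u ^ k - k * d * ∑ u, (c * x u) ^ (k - 1) * w u := by
  have hterm (u : ι) :
      d ^ 2 ∣ x (σ u) ^ k - (c * x u) ^ (k - 1) * (d * w u) * k - (c * x u) ^ k := by
    rw [h u]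
    exact (pow_dvd_pow_of_dvd (dvd_mul_right d (w u)) 2).trans (sq_dvd_add_pow_sub_sub _ _ _)
  have hsum : (1 - c ^ k) * ∑ u, x u ^ k - k * d * ∑ u, (c * x u) ^ (k - 1) * w u =
      ∑ u, (x (σ u) ^ k - (c * x u) ^ (k - 1) * (d * w u) * k - (c * x u) ^ k) := by
    rw [sum_sub_distrib, sum_sub_distrib, Equiv.sum_comp σ fun u => x u ^ k, sub_mul, one_mul,
      mul_sum, mul_sum, sub_right_comm]
    exact congrArg₂ _ (congrArg _ (sum_congr rfl fun u _ => by ring))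
      (sum_congr rfl fun u _ => by ring)
  exact hsum ▸ dvd_sum fun u _ => hterm u

section Padic

variable {p : ℕ} [hp : Fact p.Prime]

lemma tendsto_natCast_prime_pow_padic :
    Tendsto (fun N : ℕ => ((p ^ N : ℕ) : ℚ_[p])) atTop (𝓝 0) := by
  simpa using tendsto_pow_atTop_nhds_zero_of_norm_lt_one (Padic.norm_p_lt_one (p := p))

lemma tendsto_sum_units_zmod_val_pow_div (k : ℕ) :
    Tendsto (fun N : ℕ =>
        (∑ u : (ZMod (p ^ N))ˣ, ((u : ZMod (p ^ N)).val : ℚ_[p]) ^ (k + 1)) / (p : ℚ_[p]) ^ N)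
      atTop (𝓝 ((1 - (p : ℚ_[p]) ^ k) * ((bernoulli (k + 1) : ℚ) : ℚ_[p]))) := by
  have hfull := tendsto_sum_range_pow_div_self (tendsto_natCast_prime_pow_padic (p := p))
    (.of_forall fun N => pow_ne_zero N hp.out.ne_zero) (k + 1)
  have hp0 : (p : ℚ_[p]) ≠ 0 := Nat.cast_ne_zero.2 hp.out.ne_zero
  rw [← tendsto_add_atTop_iff_nat 1, sub_mul, one_mul]
  refine (((tendsto_add_atTop_iff_nat 1).2 hfull).sub
    (hfull.const_mul ((p : ℚ_[p]) ^ k))).congr fun N => ?_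
  rw [sum_units_zmod_prime_pow_val N fun a => (a : ℚ_[p]) ^ (k + 1)]
  simp only [Nat.cast_mul, Nat.cast_pow, mul_pow, ← mul_sum]
  field_simp
  ring

lemma exists_eq_mul_of_tendsto_of_eventually_dvd {α : Type*} {l : Filter α} [NeBot l]
    {d : ℤ_[p]} {x : α → ℤ_[p]} {L : ℚ_[p]} (hx : Tendsto (fun a => (x a : ℚ_[p])) l (𝓝 L))
    (hd : ∀ᶠ a in l, d ∣ x a) : ∃ y : ℤ_[p], L = d * y := by
  have hclosed : IsClosed (Set.range fun y : ℤ_[p] => (d * y : ℚ_[p])) :=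
    (isCompact_range (by fun_prop)).isClosed
  obtain ⟨y, hy⟩ := hclosed.mem_of_tendsto hx <| hd.mono fun a ⟨y, hy⟩ => ⟨y, by simp [hy]⟩
  exact ⟨y, hy.symm⟩

lemma toZModPow_eq_toZModPow_iff_dvd_sub {N : ℕ} {x y : ℤ_[p]} :
    PadicInt.toZModPow N x = PadicInt.toZModPow N y ↔ (p : ℤ_[p]) ^ N ∣ x - y := by
  rw [← sub_eq_zero, ← map_sub, ← RingHom.mem_ker, PadicInt.ker_toZModPow,
    Ideal.mem_span_singleton]

/-- Reduction modulo `p ^ N` on the unit group of `ℤ_[p]`. -/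
noncomputable def unitsToZModPow (N : ℕ) : ℤ_[p]ˣ →* (ZMod (p ^ N))ˣ :=
  Units.map (PadicInt.toZModPow N).toMonoidHom

lemma prime_pow_dvd_units_pow_sub_pow (x : ℤ_[p]ˣ) {m n N : ℕ} (h : m ≡ n [MOD φ (p ^ N)]) :
    (p : ℤ_[p]) ^ N ∣ (x : ℤ_[p]) ^ m - (x : ℤ_[p]) ^ n := by
  have horder : orderOf (unitsToZModPow N x) ∣ φ (p ^ N) :=
    orderOf_dvd_of_pow_eq_one (ZMod.pow_totient _)
  have hpow : unitsToZModPow N (x ^ m) = unitsToZModPow N (x ^ n) := by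
    simpa only [map_pow] using pow_eq_pow_iff_modEq.2 (h.of_dvd horder)
  exact toZModPow_eq_toZModPow_iff_dvd_sub.1 (congrArg Units.val hpow)

lemma isUnit_natCast_val_units_zmod_prime_pow {N : ℕ} (hN : N ≠ 0) (u : (ZMod (p ^ N))ˣ) :
    IsUnit ((u : ZMod (p ^ N)).val : ℤ_[p]) := by
  rw [PadicInt.isUnit_iff, PadicInt.norm_natCast_eq_one_iff]
  exact ((Nat.coprime_pow_right_iff (Nat.pos_of_ne_zero hN) _ _).1
    (ZMod.val_coe_unit_coprime u)).symm

lemma prime_pow_dvd_val_unitsToZModPow_mul_sub (c : ℤ_[p]ˣ) (N : ℕ) (u : (ZMod (p ^ N))ˣ) :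
    (p : ℤ_[p]) ^ N ∣ (((unitsToZModPow N c * u : (ZMod (p ^ N))ˣ) : ZMod (p ^ N)).val : ℤ_[p]) -
      c * (u : ZMod (p ^ N)).val := by
  rw [← toZModPow_eq_toZModPow_iff_dvd_sub]
  simp [unitsToZModPow]

/-- The mass `(⟨c u⟩ - c ⟨u⟩) / p ^ N` of the residue class `v + p ^ N ℤ_p`, where `v = c u` and
`⟨·⟩` is the representative in `[0, p ^ N)`. It differs from the Mazur measure
`B₁(⟨v⟩ / p ^ N) - c B₁(⟨c⁻¹ v⟩ / p ^ N)` of the class, with `B₁(X) = X - 1 / 2`, only by the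
constant `(c - 1) / 2`, which does not affect integrals of power functions over `ℤ_p^×`. -/
noncomputable def mazurWeight (c : ℤ_[p]ˣ) (N : ℕ) (u : (ZMod (p ^ N))ˣ) : ℤ_[p] :=
  (prime_pow_dvd_val_unitsToZModPow_mul_sub c N u).choose

lemma val_unitsToZModPow_mul_eq (c : ℤ_[p]ˣ) (N : ℕ) (u : (ZMod (p ^ N))ˣ) :
    (((unitsToZModPow N c * u : (ZMod (p ^ N))ˣ) : ZMod (p ^ N)).val : ℤ_[p]) =
      c * (u : ZMod (p ^ N)).val + (p : ℤ_[p]) ^ N * mazurWeight c N u :=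
  eq_add_of_sub_eq' (prime_pow_dvd_val_unitsToZModPow_mul_sub c N u).choose_spec

/-- The `N`-th Riemann sum of `f` over `ℤ_p^×` for the Mazur measure. The class of `c u` modulo
`p ^ N` is sampled at `c ⟨u⟩`, the main term of `val_unitsToZModPow_mul_eq`, rather than at its
representative `⟨c u⟩`. -/
noncomputable def mazurRiemannSum (c : ℤ_[p]ˣ) (f : ℤ_[p] → ℤ_[p]) (N : ℕ) : ℤ_[p] :=
  ∑ u : (ZMod (p ^ N))ˣ, f (c * (u : ZMod (p ^ N)).val) * mazurWeight c N u

lemma dvd_mazurRiemannSum_sub (c : ℤ_[p]ˣ) {d : ℤ_[p]} {f g : ℤ_[p] → ℤ_[p]}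
    (hfg : ∀ x : ℤ_[p]ˣ, d ∣ f x - g x) {N : ℕ} (hN : N ≠ 0) :
    d ∣ mazurRiemannSum c f N - mazurRiemannSum c g N := by
  rw [mazurRiemannSum, mazurRiemannSum, ← sum_sub_distrib]
  refine dvd_sum fun u _ => ?_
  obtain ⟨x, hx⟩ := c.isUnit.mul (isUnit_natCast_val_units_zmod_prime_pow hN u)
  rw [← sub_mul, ← hx]
  exact (hfg x).mul_right _

lemma sq_prime_pow_dvd_sum_sub_mazurRiemannSum_pow (c : ℤ_[p]ˣ) (k N : ℕ) :
    ((p : ℤ_[p]) ^ N) ^ 2 ∣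
      (1 - (c : ℤ_[p]) ^ (k + 1)) * ∑ u : (ZMod (p ^ N))ˣ,
        ((u : ZMod (p ^ N)).val : ℤ_[p]) ^ (k + 1) -
      (k + 1) * (p : ℤ_[p]) ^ N * mazurRiemannSum c (· ^ k) N := by
  rw [← Nat.cast_succ]
  exact sq_dvd_one_sub_pow_mul_sum_pow_sub (Equiv.mulLeft (unitsToZModPow N c))
    (x := fun u => ((u : ZMod (p ^ N)).val : ℤ_[p])) (val_unitsToZModPow_mul_eq c N) (k + 1)

lemma tendsto_mazurRiemannSum_pow (c : ℤ_[p]ˣ) (k : ℕ) :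
    Tendsto (fun N => (mazurRiemannSum c (· ^ k) N : ℚ_[p])) atTop
      (𝓝 ((1 - ((c : ℤ_[p]) : ℚ_[p]) ^ (k + 1)) *
        ((1 - (p : ℚ_[p]) ^ k) * (((bernoulli (k + 1) : ℚ) : ℚ_[p]) / (k + 1))))) := by
  have hp0 : (p : ℚ_[p]) ≠ 0 := Nat.cast_ne_zero.2 hp.out.ne_zero
  have hk : (k : ℚ_[p]) + 1 ≠ 0 := Nat.cast_add_one_ne_zero k
  choose e he using sq_prime_pow_dvd_sum_sub_mazurRiemannSum_pow c k
  have hpow : Tendsto (fun N : ℕ => (p : ℚ_[p]) ^ N) atTop (𝓝 0) := by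
    simpa using tendsto_natCast_prime_pow_padic (p := p)
  have herror : Tendsto (fun N => (p : ℚ_[p]) ^ N * e N) atTop (𝓝 0) :=
    hpow.zero_mul_isBoundedUnder_le
      (isBoundedUnder_of ⟨1, fun N => PadicInt.norm_le_one (e N)⟩)
  have hlim := (((tendsto_sum_units_zmod_val_pow_div (p := p) k).const_mul
    (1 - ((c : ℤ_[p]) : ℚ_[p]) ^ (k + 1))).sub herror).div_const ((k : ℚ_[p]) + 1)
  convert! hlim using 2 with N
  · have heN := congrArg (fun x : ℤ_[p] => (x : ℚ_[p])) (he N)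
    push_cast [PadicInt.coe_sum] at heN
    field_simp
    linear_combination -heN
  · ring

end Padic

theorem regularized_kummer_congruence_general (p : ℕ) [Fact p.Prime] (c : ℤ_[p]ˣ)
    (m n : ℕ) (hm : 1 ≤ m) (hn : 1 ≤ n) (i : ℕ) (hmn : m ≡ n [MOD (p - 1) * p ^ i]) :
    ∃ y : ℤ_[p],
      ((1 - (c : ℤ_[p]) ^ m : ℤ_[p]) : ℚ_[p]) *
          ((((1 - (p : ℚ) ^ (m - 1)) * (bernoulli m / (m : ℚ))) : ℚ) : ℚ_[p]) -
        ((1 - (c : ℤ_[p]) ^ n : ℤ_[p]) : ℚ_[p]) *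
          ((((1 - (p : ℚ) ^ (n - 1)) * (bernoulli n / (n : ℚ))) : ℚ) : ℚ_[p]) =
      (p : ℚ_[p]) ^ (i + 1) * (y : ℚ_[p]) := by
  obtain ⟨m, rfl⟩ := Nat.exists_eq_add_of_le' hm
  obtain ⟨n, rfl⟩ := Nat.exists_eq_add_of_le' hn
  have hmod : m ≡ n [MOD φ (p ^ (i + 1))] := by
    rw [Nat.totient_prime_pow_succ Fact.out, mul_comm]
    exact hmn.add_right_cancel' 1
  have hdvd : ∀ᶠ N in atTop, (p : ℤ_[p]) ^ (i + 1) ∣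
      mazurRiemannSum c (· ^ m) N - mazurRiemannSum c (· ^ n) N :=
    (eventually_ne_atTop 0).mono fun N hN =>
      dvd_mazurRiemannSum_sub c (fun x => prime_pow_dvd_units_pow_sub_pow x hmod) hN
  have hlim := (tendsto_mazurRiemannSum_pow c m).sub (tendsto_mazurRiemannSum_pow c n)
  simp only [← PadicInt.coe_sub] at hlim
  simpa using exists_eq_mul_of_tendsto_of_eventually_dvd hlim hdvd

/-- regularized Kümmer congruences at an odd prime `p`.  If `c ∈ ℤ_p^×`,
`c ≠ ±1`, and `m ≡ n (mod (p−1)pⁱ)` with `m, n ≥ 1`, then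
`(1 − cᵐ)(1 − p^{m−1})·B_m/m − (1 − cⁿ)(1 − p^{n−1})·B_n/n ∈ p^{i+1}·ℤ_p`. -/
theorem regularized_kummer_congruence (p : ℕ) [Fact p.Prime] (hp : p ≠ 2) (c : ℤ_[p]ˣ)
    (hc1 : (c : ℤ_[p]) ≠ 1) (hc2 : (c : ℤ_[p]) ≠ -1)
    (m n : ℕ) (hm : 1 ≤ m) (hn : 1 ≤ n) (i : ℕ)
    (hmn : m ≡ n [MOD (p - 1) * p ^ i]) :
    ∃ y : ℤ_[p],
      ((1 - (c : ℤ_[p]) ^ m : ℤ_[p]) : ℚ_[p]) *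
          ((((1 - (p : ℚ) ^ (m - 1)) * (bernoulli m / (m : ℚ))) : ℚ) : ℚ_[p]) -
        ((1 - (c : ℤ_[p]) ^ n : ℤ_[p]) : ℚ_[p]) *
          ((((1 - (p : ℚ) ^ (n - 1)) * (bernoulli n / (n : ℚ))) : ℚ) : ℚ_[p]) =
      (p : ℚ_[p]) ^ (i + 1) * (y : ℚ_[p]) :=
  regularized_kummer_congruence_general p c m n hm hn i hmn
end

section
/- Let p be a prime and let c ∈ ℤ_p^× with c ≠ 1 and c ≠ −1. Let R := ℤ((t))^∧_p be the p-adic completion of the Laurent series ring ℤ((t)), and let ζ := p^{−1}·((t^{−1} − 1)^p − t^{−p} + 1), a polynomial in t^{−1} with integer coefficients. For each n ≥ 1 define M_n ∈ R by M_n := (1 − c^n)·∑_{m=1}^n ((−1)^{m−1}·Δ^m[r^n](0)/m)·( t^{−m} − p^{n−1}·t^{−pm}·(1 − pζ)^{−m} ), where the inverse of 1 − pζ is taken in R. Then there exists M_0 ∈ R such that (M_n)_{n≥0} is an R-valued p-adic moment sequence: for every polynomial f(r) = ∑_{n=0}^N a_n r^n with rational coefficients satisfying f(x) ∈ ℤ_p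 for every x ∈ ℤ_p^×, the element ∑_{n=0}^N a_n·M_n of R ⊗ ℚ lies in the image of R. -/
/-! In the coordinate `T = x / (x - 1)`, Newton's forward difference formula identifies
`∑ₘ (-1)ᵐ⁻¹ (Δᵐ[rⁿ](0) / m) Tᵐ` with `-∑_{j ≥ 1} jⁿ⁻¹ xʲ`. The substitution `x ↦ xᵖ` sends `T` to
`Tᵖ / (Tᵖ - (T - 1)ᵖ)`, and at `T = t⁻¹` the denominator is `1 - p ζ`; hence the sum in `Mₙ` is the
value of the rational function `-∑_{p ∤ j} jⁿ⁻¹ xʲ`. For `f = ∑ aₙ rⁿ` as in the theorem, the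
coefficients of `∑ aₙ (1 - cⁿ) ∑_{p ∤ j} jⁿ⁻¹ xʲ` are `(f(j) - f(c j)) / j`, which lie in `ℤ_p`
because `j` is a unit.

This integrality has to be carried over to `T = t⁻¹`, where the series in `x` do not converge. The
combination is the image of an element of `S[T][1 / (Tᵖ - (T - 1)ᵖ)]`, with `S = ℤ_p`. Divisibility
by a scalar descends from `S⟦x⟧` to this ring, because `x ↦ x / (x - 1)` is an involution and turns
a polynomial in `T` back into the same polynomial in `x`; it then specializes to every ring in which
`Tᵖ - (T - 1)ᵖ` is invertible. -/

open scoped TensorProduct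

set_option synthInstance.maxHeartbeats 1000000
set_option maxHeartbeats 1000000

/-- An `A`-valued `p`-adic moment sequence: for every polynomial `f(r) = ∑ aₙ rⁿ` with
rational coefficients taking `ℤ_p`-integral values on `ℤ_p^×`, the element
`∑ aₙ · Mₙ` of `A ⊗ ℚ` lies in the image of the natural map `A → A ⊗ ℚ`. -/
def IsPadicMomentSeq (p : ℕ) [Fact p.Prime] {A : Type*} [CommRing A] (M : ℕ → A) : Prop :=
  ∀ f : Polynomial ℚ,
    (∀ x : ℤ_[p]ˣ, ‖Polynomial.aeval ((x : ℤ_[p]) : ℚ_[p]) f‖ ≤ 1) →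
    ∃ y : A, (∑ n ∈ f.support, (M n) ⊗ₜ[ℤ] (f.coeff n)) = y ⊗ₜ[ℤ] (1 : ℚ)

noncomputable section

/-- The ring `R = ℤ((t))^∧_p`, the `p`-adic completion of the ring of formal Laurent
series (realized with `ℤ_p`-coefficients, via the canonical identification
`ℤ((t))^∧_p ≅ ℤ_p((t))^∧_p`). -/
abbrev ToddRing (p : ℕ) [Fact p.Prime] : Type :=
  AdicCompletion (Ideal.span {(p : LaurentSeries ℤ_[p])}) (LaurentSeries ℤ_[p])

/-- The element `t⁻¹` of `R`. -/
def tinv (p : ℕ) [Fact p.Prime] : ToddRing p :=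
  algebraMap (LaurentSeries ℤ_[p]) (ToddRing p) (HahnSeries.single (-1 : ℤ) (1 : ℤ_[p]))

/-- `Δ^m[rⁿ](0) = ∑_{j=0}^m (−1)^{m−j}·C(m,j)·jⁿ`, the `m`-th forward finite difference
of the polynomial `r ↦ rⁿ` evaluated at `0`. -/
def finiteDiff (m n : ℕ) : ℤ :=
  ∑ j ∈ Finset.range (m + 1), (-1) ^ (m - j) * (m.choose j : ℤ) * (j : ℤ) ^ n

section FiniteDifferences

open scoped fwdDiff

theorem sum_range_choose_mul_fwdDiff_iter_pow {R : Type*} [CommRing R] (y : R) (n j : ℕ) :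
    ∑ m ∈ Finset.range (n + 1), (j.choose m : R) * (Δ_[1])^[m] (fun r : R ↦ r ^ n) y =
      (y + j) ^ n := by
  have newton := shift_eq_sum_fwdDiff_iter 1 (fun r : R ↦ r ^ n) j y
  simp only [nsmul_eq_mul, mul_one] at newton
  rw [newton, ← Finset.eventually_constant_sum (N := n + 1) (n := n + j + 1),
    ← Finset.eventually_constant_sum (N := j + 1) (n := n + j + 1)]
  · intro m hm
    rw [Nat.choose_eq_zero_of_lt (by lia), Nat.cast_zero, zero_mul]
  · lia
  · intro m hm
    rw [fwdDiff_iter_pow_eq_zero_of_lt (by lia), Pi.zero_apply, mul_zero]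
  · lia

theorem finiteDiff_succ_succ (m n : ℕ) :
    finiteDiff (m + 1) (n + 1) = (m + 1) * (Δ_[1])^[m] (fun r : ℤ ↦ r ^ n) 1 := by
  rw [finiteDiff, Finset.sum_range_succ', fwdDiff_iter_eq_sum_shift, Finset.mul_sum]
  simp only [Nat.cast_zero, zero_pow n.succ_ne_zero, mul_zero, add_zero]
  refine Finset.sum_congr rfl fun j _ ↦ ?_
  have absorption : ((m + 1 : ℕ) : ℤ) * m.choose j = (m + 1).choose (j + 1) * (j + 1 : ℕ) :=
    mod_cast Nat.add_one_mul_choose_eq m j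
  push_cast at absorption
  rw [Nat.add_sub_add_right, smul_eq_mul, nsmul_one, pow_succ]
  push_cast
  rw [add_comm (1 : ℤ) j]
  linear_combination -(-1) ^ (m - j) * ((j : ℤ) + 1) ^ n * absorption

theorem neg_one_pow_mul_finiteDiff_succ_succ_ediv (m n : ℕ) :
    (-1) ^ m * finiteDiff (m + 1) (n + 1) / ((m + 1 : ℕ) : ℤ) =
      (-1) ^ m * (Δ_[1])^[m] (fun r : ℤ ↦ r ^ n) 1 := by
  rw [finiteDiff_succ_succ, mul_left_comm, Nat.cast_succ, Int.mul_ediv_cancel_left _ (by lia)]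

end FiniteDifferences

section Polylogarithms

open PowerSeries
open scoped fwdDiff

/-- The polynomial in `T = x / (x - 1)` that expresses `-Li₋ₙ(x)`, where
`Li₋ₙ(x) = ∑_{j ≥ 1} jⁿ xʲ`; see `pfaffPolylog_pfaffSeries`. Its coefficients are integers, so it
is evaluated in an arbitrary commutative ring. -/
def pfaffPolylog {R : Type*} [CommRing R] (n : ℕ) (T : R) : R :=
  ∑ m ∈ Finset.range (n + 1), (((-1) ^ m * (Δ_[1])^[m] (fun r : ℤ ↦ r ^ n) 1 : ℤ) : R) * T ^ (m + 1)

/-- The power series `Li₋ₙ = ∑_{j ≥ 1} jⁿ xʲ`, the polylogarithm of order `-n`. The coefficient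
at `j = 0` is set apart because `0 ^ 0 = 1`. -/
def polylogSeries (S : Type*) [CommRing S] (n : ℕ) : S⟦X⟧ :=
  mk fun j ↦ if j = 0 then 0 else (j : S) ^ n

/-- The expansion of the involution `x ↦ x / (x - 1)`, the change of variables in Pfaff's
transformation. -/
def pfaffSeries (S : Type*) [CommRing S] : S⟦X⟧ :=
  -(X * mk 1)

/-- The `p`-depleted polylogarithm `-(Li₋ₙ(x) - pⁿ Li₋ₙ(xᵖ))` in the coordinate
`T = x / (x - 1)`. The image `V` of `T` under `x ↦ xᵖ` is an independent argument; it is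
determined by `(Tᵖ - (T - 1)ᵖ) V = Tᵖ` as soon as `Tᵖ - (T - 1)ᵖ` is a unit. -/
def depletedPolylog {R : Type*} [CommRing R] (p n : ℕ) (T V : R) : R :=
  pfaffPolylog n T - (p : R) ^ n * pfaffPolylog n V

theorem map_pfaffPolylog {R R' : Type*} [CommRing R] [CommRing R'] (φ : R →+* R') (n : ℕ) (T : R) :
    φ (pfaffPolylog n T) = pfaffPolylog n (φ T) := by
  simp only [pfaffPolylog, map_sum, map_mul, map_intCast, map_pow]

theorem map_depletedPolylog {R R' : Type*} [CommRing R] [CommRing R'] (φ : R →+* R') (p n : ℕ)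
    (T V : R) : φ (depletedPolylog p n T V) = depletedPolylog p n (φ T) (φ V) := by
  simp only [depletedPolylog, map_sub, map_mul, map_pow, map_natCast, map_pfaffPolylog]

theorem map_depletedPolylog_of_mul_eq_pow {R R' : Type*} [CommRing R] [CommRing R'] (φ : R →+* R')
    {p : ℕ} {T V : R} {T' V' : R'} (hφ : φ T = T') (hT' : IsUnit (T' ^ p - (T' - 1) ^ p))
    (hV : (T ^ p - (T - 1) ^ p) * V = T ^ p) (hV' : (T' ^ p - (T' - 1) ^ p) * V' = T' ^ p) (n : ℕ) :
    φ (depletedPolylog p n T V) = depletedPolylog p n T' V' := by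
  have mapped := congr_arg φ hV
  simp only [map_mul, map_sub, map_pow, map_one, hφ] at mapped
  rw [map_depletedPolylog, hφ, hT'.mul_left_cancel (mapped.trans hV'.symm)]

theorem sum_finiteDiff_mul_eq_depletedPolylog {R : Type*} [CommRing R] (p n : ℕ) (T i : R) :
    ∑ m ∈ Finset.Icc 1 (n + 1),
        (((-1) ^ (m - 1) * finiteDiff m (n + 1) / (m : ℤ) : ℤ) : R) *
          (T ^ m - (p : R) ^ n * T ^ (p * m) * i ^ m) =
      depletedPolylog p n T (T ^ p * i) := by
  rw [← Finset.Ico_add_one_right_eq_Icc, Finset.sum_Ico_eq_sum_range, depletedPolylog, pfaffPolylog,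
    pfaffPolylog, Finset.mul_sum, ← Finset.sum_sub_distrib, Nat.add_sub_cancel]
  refine Finset.sum_congr rfl fun m _ ↦ ?_
  rw [add_comm 1 m, Nat.add_sub_cancel, neg_one_pow_mul_finiteDiff_succ_succ_ediv]
  ring

variable (S : Type*) [CommRing S]

theorem pfaffSeries_mul_X_sub_one : pfaffSeries S * (X - 1) = X := by
  rw [pfaffSeries]
  linear_combination X * mk_one_mul_one_sub_eq_one S

theorem hasSubst_pfaffSeries : HasSubst (pfaffSeries S) :=
  HasSubst.of_constantCoeff_zero' (by simp [pfaffSeries])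

theorem subst_pfaffSeries_pfaffSeries : (pfaffSeries S).subst (pfaffSeries S) = X := by
  have substituted := congr_arg (substAlgHom (hasSubst_pfaffSeries S)) (pfaffSeries_mul_X_sub_one S)
  simp only [map_mul, map_sub, map_one, substAlgHom_X, coe_substAlgHom] at substituted
  have unit : (pfaffSeries S - 1) * (X - 1) = 1 := by
    linear_combination pfaffSeries_mul_X_sub_one S
  linear_combination (X - 1) * substituted - (pfaffSeries S).subst (pfaffSeries S) * unit
    + pfaffSeries_mul_X_sub_one S

theorem coeff_succ_pfaffSeries_pow_succ (m j : ℕ) :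
    coeff (j + 1) (pfaffSeries S ^ (m + 1)) = (-1) ^ (m + 1) * (j.choose m : S) := by
  have factor : pfaffSeries S ^ (m + 1) = C ((-1) ^ (m + 1)) * (X ^ (m + 1) * mk 1 ^ (m + 1)) := by
    rw [pfaffSeries, neg_pow, mul_pow, map_pow, map_neg, map_one]
  rw [factor, coeff_C_mul, coeff_X_pow_mul', mk_one_pow_eq_mk_choose_add, Nat.add_sub_add_right,
    coeff_mk]
  split_ifs with h
  · rw [Nat.add_sub_cancel' (Nat.le_of_succ_le_succ h)]
  · rw [Nat.choose_eq_zero_of_lt (by lia), Nat.cast_zero]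

theorem pfaffPolylog_pfaffSeries (n : ℕ) :
    pfaffPolylog n (pfaffSeries S) = -polylogSeries S n := by
  ext j
  simp only [pfaffPolylog, map_sum, map_neg, polylogSeries, coeff_mk, ← map_intCast (C (R := S)),
    coeff_C_mul]
  rcases j with _ | j
  · simp [pfaffSeries]
  have newton := congr_arg (Int.cast : ℤ → S) (sum_range_choose_mul_fwdDiff_iter_pow 1 n j)
  push_cast at newton
  rw [if_neg j.succ_ne_zero, Nat.cast_succ, add_comm (j : S), ← newton, ← Finset.sum_neg_distrib]
  refine Finset.sum_congr rfl fun m _ ↦ ?_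
  rw [coeff_succ_pfaffSeries_pow_succ, pow_succ]
  push_cast
  have sign : (-1 : S) ^ m * (-1) ^ m = 1 := by rw [← mul_pow, neg_one_mul, neg_neg, one_pow]
  linear_combination
    -(j.choose m : S) * (((Δ_[1])^[m] (fun r : ℤ ↦ r ^ n) 1 : ℤ) : S) * sign

theorem isUnit_pow_sub_pow_pfaffSeries {p : ℕ} (hp : p ≠ 0) :
    IsUnit (pfaffSeries S ^ p - (pfaffSeries S - 1) ^ p) := by
  rw [isUnit_iff_constantCoeff]
  simp [pfaffSeries, hp]

theorem pow_sub_pow_mul_expand_pfaffSeries {p : ℕ} (hp : p ≠ 0) :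
    (pfaffSeries S ^ p - (pfaffSeries S - 1) ^ p) * expand p hp (pfaffSeries S) =
      pfaffSeries S ^ p := by
  have expanded := congr_arg (expand p hp) (pfaffSeries_mul_X_sub_one S)
  simp only [map_mul, map_sub, map_one, expand_X] at expanded
  have factor : pfaffSeries S = X * (pfaffSeries S - 1) := by
    linear_combination -pfaffSeries_mul_X_sub_one S
  have factor_pow : pfaffSeries S ^ p = X ^ p * (pfaffSeries S - 1) ^ p := by
    rw [← mul_pow, ← factor]
  linear_combination (expand p hp (pfaffSeries S) - 1) * factor_pow
    + (pfaffSeries S - 1) ^ p * expanded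

theorem coeff_depletedPolylog_pfaffSeries {p : ℕ} (hp : p ≠ 0) (n j : ℕ) :
    coeff j (depletedPolylog p n (pfaffSeries S) (expand p hp (pfaffSeries S))) =
      if p ∣ j then 0 else -(j : S) ^ n := by
  have expanded := map_pfaffPolylog (expand p hp (R := S)).toRingHom n (pfaffSeries S)
  rw [AlgHom.toRingHom_eq_coe, RingHom.coe_coe] at expanded
  rw [depletedPolylog, ← expanded, pfaffPolylog_pfaffSeries, ← map_natCast (C (R := S)),
    ← map_pow, map_sub, coeff_C_mul, map_neg, map_neg, map_neg, coeff_expand]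
  simp only [polylogSeries, coeff_mk]
  by_cases hj : p ∣ j
  · obtain ⟨k, rfl⟩ := hj
    rcases k.eq_zero_or_pos with rfl | hk
    · simp
    · simp [hp, hk.ne', mul_pow, Nat.mul_div_cancel_left k hp.bot_lt]
  · have hj0 : j ≠ 0 := by rintro rfl; exact hj (dvd_zero p)
    simp [hj, hj0]

variable {S}

theorem powerSeriesC_dvd_of_forall_dvd_coeff {N : S} {F : S⟦X⟧} (h : ∀ j, N ∣ coeff j F) :
    C N ∣ F := by
  choose G hG using h
  exact ⟨mk G, by ext j; rw [coeff_C_mul, coeff_mk, hG]⟩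

theorem C_dvd_sum_mul_depletedPolylog_pfaffSeries {ι : Type*} {p : ℕ} (hp : p ≠ 0) (s : Finset ι)
    (β : ι → S) (e : ι → ℕ) {N : S} (h : ∀ j : ℕ, ¬p ∣ j → N ∣ ∑ i ∈ s, β i * (j : S) ^ e i) :
    C N ∣ ∑ i ∈ s, C (β i) *
      depletedPolylog p (e i) (pfaffSeries S) (expand p hp (pfaffSeries S)) := by
  refine powerSeriesC_dvd_of_forall_dvd_coeff fun j ↦ ?_
  simp only [map_sum, coeff_C_mul, coeff_depletedPolylog_pfaffSeries]
  split_ifs with hj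
  · simp only [mul_zero, Finset.sum_const_zero, dvd_zero]
  · simpa only [mul_neg, Finset.sum_neg_distrib, dvd_neg] using h j hj

end Polylogarithms

section Transfer

open Polynomial

theorem C_dvd_of_dvd_aeval_pfaffSeries {S : Type*} [CommRing S] {N : S} {P : S[X]}
    (h : PowerSeries.C N ∣ aeval (pfaffSeries S) P) : C N ∣ P := by
  have hτ := hasSubst_pfaffSeries S
  have involution : PowerSeries.substAlgHom hτ (aeval (pfaffSeries S) P) = (P : PowerSeries S) := by
    rw [← aeval_algHom_apply, PowerSeries.coe_substAlgHom, subst_pfaffSeries_pfaffSeries,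
      aeval_def]
    exact eval₂_C_X_eq_coe
  have substituted := map_dvd (PowerSeries.substAlgHom hτ) h
  rw [involution, PowerSeries.C_eq_algebraMap, AlgHom.commutes] at substituted
  obtain ⟨G, hG⟩ := substituted
  rw [C_dvd_iff_dvd_coeff]
  refine fun i ↦ ⟨PowerSeries.coeff i G, ?_⟩
  rw [← coeff_coe, hG, ← PowerSeries.C_eq_algebraMap, PowerSeries.coeff_C_mul]

theorem algebraMap_C_dvd_of_dvd_lift_pfaffSeries {S B : Type*} [CommRing S] [CommRing B]
    [Algebra S[X] B] {D : S[X]} [IsLocalization.Away D B]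
    (hD : IsUnit ((aeval (pfaffSeries S)).toRingHom D)) {N : S} {b : B}
    (h : PowerSeries.C N ∣ IsLocalization.Away.lift D hD b) : algebraMap S[X] B (C N) ∣ b := by
  obtain ⟨k, P, hP⟩ := IsLocalization.Away.surj D b
  rw [← (IsLocalization.Away.algebraMap_pow_isUnit D k).dvd_mul_right, hP]
  refine map_dvd _ (C_dvd_of_dvd_aeval_pfaffSeries ?_)
  have lifted := congr_arg (IsLocalization.Away.lift D hD) hP
  rw [map_mul, IsLocalization.Away.lift_eq] at lifted
  exact (h.mul_right _).trans (dvd_of_eq lifted)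

theorem algebraMap_dvd_sum_mul_depletedPolylog {S R ι : Type*} [CommRing S] [CommRing R]
    [Algebra S R] {p : ℕ} (hp : p ≠ 0) {T V : R} (hT : IsUnit (T ^ p - (T - 1) ^ p))
    (hV : (T ^ p - (T - 1) ^ p) * V = T ^ p) (s : Finset ι) (β : ι → S) (e : ι → ℕ) {N : S}
    (h : ∀ j : ℕ, ¬p ∣ j → N ∣ ∑ i ∈ s, β i * (j : S) ^ e i) :
    algebraMap S R N ∣ ∑ i ∈ s, algebraMap S R (β i) * depletedPolylog p (e i) T V := by
  set D : S[X] := X ^ p - (X - 1) ^ p with hD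
  set B := Localization.Away D
  set γ : S[X] →+* B := algebraMap S[X] B
  have hV₀ : (γ X ^ p - (γ X - 1) ^ p) * (γ X ^ p * IsLocalization.Away.invSelf D) = γ X ^ p := by
    have inv := IsLocalization.Away.mul_invSelf (S := B) D
    simp only [hD, map_sub, map_pow, map_one] at inv
    rw [mul_left_comm, inv, mul_one]
  set V₀ : B := γ X ^ p * IsLocalization.Away.invSelf D
  have unit_series : IsUnit ((aeval (pfaffSeries S)).toRingHom D) := by
    simpa [hD] using isUnit_pow_sub_pow_pfaffSeries S hp
  have unit_R : IsUnit ((aeval (R := S) T).toRingHom D) := by simpa [hD] using hT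
  have universal : γ (C N) ∣ ∑ i ∈ s, γ (C (β i)) * depletedPolylog p (e i) (γ X) V₀ := by
    refine algebraMap_C_dvd_of_dvd_lift_pfaffSeries unit_series ?_
    simpa [γ, IsLocalization.Away.lift_eq, map_depletedPolylog_of_mul_eq_pow _ _
      (isUnit_pow_sub_pow_pfaffSeries S hp) hV₀ (pow_sub_pow_mul_expand_pfaffSeries S hp)]
      using C_dvd_sum_mul_depletedPolylog_pfaffSeries hp s β e h
  have specialized := map_dvd (IsLocalization.Away.lift D unit_R) universal
  simpa [γ, IsLocalization.Away.lift_eq, map_depletedPolylog_of_mul_eq_pow _ _ hT hV₀ hV]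
    using specialized

end Transfer

section Moments

open Polynomial

theorem isPadicMomentSeq_of_forall_dvd (p : ℕ) [Fact p.Prime] {A : Type*} [CommRing A] {M : ℕ → A}
    (h : ∀ (N : ℤ) (g : ℤ[X]), (∀ x : ℤ_[p]ˣ, (N : ℤ_[p]) ∣ aeval (x : ℤ_[p]) g) →
      (N : A) ∣ ∑ n ∈ g.support, (g.coeff n : A) * M n) :
    IsPadicMomentSeq p M := by
  intro f hf
  obtain ⟨N, hN, hg⟩ := IsLocalization.integerNormalization_spec (nonZeroDivisors ℤ) f
  set g := IsLocalization.integerNormalization (nonZeroDivisors ℤ) f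
  have hN0 : (N : ℚ) ≠ 0 := Int.cast_ne_zero.mpr (nonZeroDivisors.ne_zero hN)
  have coeff_eq (n : ℕ) : f.coeff n = g.coeff n • (N : ℚ)⁻¹ := by
    have cleared := congr_arg (coeff · n) hg
    simp only [coeff_map, coeff_smul] at cleared
    rw [eq_intCast, zsmul_eq_mul] at cleared
    rw [zsmul_eq_mul, cleared, mul_comm (N : ℚ), mul_inv_cancel_right₀ hN0]
  have support_eq : f.support = g.support := by
    ext n
    simp [coeff_eq, hN0]
  have integral (x : ℤ_[p]ˣ) : (N : ℤ_[p]) ∣ aeval (x : ℤ_[p]) g := by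
    obtain ⟨q, hq⟩ : ∃ q : ℤ_[p], (q : ℚ_[p]) = aeval ((x : ℤ_[p]) : ℚ_[p]) f := ⟨⟨_, hf x⟩, rfl⟩
    refine ⟨q, PadicInt.ext ?_⟩
    have evaluated := congr_arg (aeval ((x : ℤ_[p]) : ℚ_[p])) hg
    rw [map_zsmul, aeval_map_algebraMap, zsmul_eq_mul] at evaluated
    rw [PadicInt.coe_mul, PadicInt.coe_intCast, hq, ← evaluated]
    exact (aeval_algebraMap_apply ℚ_[p] (x : ℤ_[p]) g).symm
  obtain ⟨y, hy⟩ := h N g integral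
  refine ⟨y, ?_⟩
  calc ∑ n ∈ f.support, M n ⊗ₜ[ℤ] f.coeff n
      = (∑ n ∈ g.support, (g.coeff n : A) * M n) ⊗ₜ[ℤ] (N : ℚ)⁻¹ := by
        simp only [support_eq, coeff_eq, TensorProduct.sum_tmul, ← zsmul_eq_mul,
          TensorProduct.smul_tmul]
    _ = y ⊗ₜ[ℤ] (1 : ℚ) := by
        rw [hy, ← zsmul_eq_mul, TensorProduct.smul_tmul, zsmul_eq_mul, mul_inv_cancel₀ hN0]

theorem dvd_sum_coeff_mul_one_sub_pow {S : Type*} [CommRing S] {N : S} {g : ℤ[X]}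
    (h : ∀ x : Sˣ, N ∣ aeval (x : S) g) (c x : Sˣ) :
    N ∣ ∑ n ∈ g.support, g.coeff n * (1 - (c : S) ^ n) * (x : S) ^ (n - 1) := by
  have difference : (x : S) * ∑ n ∈ g.support, g.coeff n * (1 - (c : S) ^ n) * (x : S) ^ (n - 1) =
      aeval (x : S) g - aeval ((c * x : Sˣ) : S) g := by
    simp only [aeval_def, eval₂_eq_sum, sum_def, algebraMap_int_eq, eq_intCast, Finset.mul_sum,
      ← Finset.sum_sub_distrib, Units.val_mul]
    refine Finset.sum_congr rfl fun n _ ↦ ?_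
    rcases n with _ | n
    · simp
    · rw [Nat.add_sub_cancel]
      ring
  rw [← Units.dvd_mul_left (u := x), difference]
  exact dvd_sub (h x) (h (c * x))

theorem isUnit_one_sub_algebraMap_adicCompletion {R : Type*} [CommRing R] {I : Ideal R} (hI : I.FG)
    {a : R} (ha : a ∈ I) : IsUnit (1 - algebraMap R (AdicCompletion I R) a) := by
  have : IsAdicComplete I (AdicCompletion I R) := AdicCompletion.isAdicComplete hI
  have : IsAdicComplete (I.map (algebraMap R (AdicCompletion I R))) (AdicCompletion I R) :=
    (IsAdicComplete.map_algebraMap_iff _ _).mpr this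
  have mem_jacobson := IsAdicComplete.le_jacobson_bot _ (Ideal.mem_map_of_mem
    (algebraMap R (AdicCompletion I R)) ha)
  simpa [sub_eq_neg_add] using Ideal.mem_jacobson_bot.mp mem_jacobson (-1)

theorem toddSharp_momentSeq_general (p : ℕ) [Fact p.Prime] {A : Type*} [CommRing A]
    [Algebra ℤ_[p] A] {T : A} (hT : IsUnit (T ^ p - (T - 1) ^ p)) (c : ℤ_[p]ˣ) :
    IsPadicMomentSeq p fun n ↦ algebraMap ℤ_[p] A (1 - (c : ℤ_[p]) ^ n) *
      ∑ m ∈ Finset.Icc 1 n, (((-1) ^ (m - 1) * finiteDiff m n / (m : ℤ) : ℤ) : A) *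
        (T ^ m - (p : A) ^ (n - 1) * T ^ (p * m) * Ring.inverse (T ^ p - (T - 1) ^ p) ^ m) := by
  refine isPadicMomentSeq_of_forall_dvd p fun N g hg ↦ ?_
  have hV : (T ^ p - (T - 1) ^ p) * (T ^ p * Ring.inverse (T ^ p - (T - 1) ^ p)) = T ^ p := by
    rw [mul_left_comm, Ring.mul_inverse_cancel _ hT, mul_one]
  have isUnit_natCast {j : ℕ} (hj : ¬p ∣ j) : IsUnit (j : ℤ_[p]) :=
    PadicInt.isUnit_iff.mpr <| PadicInt.norm_natCast_eq_one_iff.mpr <|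
      (Fact.out : p.Prime).coprime_iff_not_dvd.mpr hj
  have divisible := algebraMap_dvd_sum_mul_depletedPolylog (Fact.out : p.Prime).ne_zero hT hV
    g.support (fun n ↦ (g.coeff n : ℤ_[p]) * (1 - (c : ℤ_[p]) ^ n)) (· - 1) (N := (N : ℤ_[p]))
    fun j hj ↦ dvd_sum_coeff_mul_one_sub_pow hg c (isUnit_natCast hj).unit
  rw [map_intCast] at divisible
  refine divisible.trans (dvd_of_eq (Finset.sum_congr rfl fun n _ ↦ ?_))
  rw [map_mul, map_intCast, mul_assoc]
  rcases n with _ | n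
  · simp
  · rw [Nat.add_sub_cancel, sum_finiteDiff_mul_eq_depletedPolylog]

end Moments

theorem one_sub_mul_algebraMap_eq_tinv_pow_sub {p : ℕ} [Fact p.Prime] {Z : LaurentSeries ℤ_[p]}
    (hZ : (p : LaurentSeries ℤ_[p]) * Z =
      (HahnSeries.single (-1 : ℤ) (1 : ℤ_[p]) - 1) ^ p -
        HahnSeries.single (-1 : ℤ) (1 : ℤ_[p]) ^ p + 1) :
    1 - (p : ToddRing p) * algebraMap (LaurentSeries ℤ_[p]) (ToddRing p) Z =
      tinv p ^ p - (tinv p - 1) ^ p := by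
  have mapped := congr_arg (algebraMap (LaurentSeries ℤ_[p]) (ToddRing p)) hZ
  simp only [map_mul, map_natCast, map_add, map_sub, map_pow, map_one] at mapped
  rw [mapped, tinv]
  ring

theorem isUnit_one_sub_natCast_mul_algebraMap (p : ℕ) [Fact p.Prime] (Z : LaurentSeries ℤ_[p]) :
    IsUnit (1 - (p : ToddRing p) * algebraMap (LaurentSeries ℤ_[p]) (ToddRing p) Z) := by
  have mem : (p : LaurentSeries ℤ_[p]) * Z ∈ Ideal.span {(p : LaurentSeries ℤ_[p])} :=
    Ideal.mul_mem_right _ _ (Ideal.mem_span_singleton_self _)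
  rw [← map_natCast (algebraMap (LaurentSeries ℤ_[p]) (ToddRing p)), ← map_mul]
  exact isUnit_one_sub_algebraMap_adicCompletion
    (Submodule.fg_span (Set.finite_singleton _)) mem

/-- the Todd♯ moment sequence.  Here `Z = ζ` is the integral Laurent
polynomial with `p·ζ = (t⁻¹ − 1)^p − t^{−p} + 1`, and for `n ≥ 1`
`M_n = (1 − cⁿ)·∑_{m=1}^n ((−1)^{m−1}·Δ^m[rⁿ](0)/m)·(t^{−m} − p^{n−1}·t^{−pm}·(1 − pζ)^{−m})`.
There is an `M_0 ∈ R` making `(M_n)` an `R`-valued `p`-adic moment sequence. -/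
theorem toddSharp_momentSeq (p : ℕ) [Fact p.Prime] (c : ℤ_[p]ˣ)
    (hc1 : (c : ℤ_[p]) ≠ 1) (hc2 : (c : ℤ_[p]) ≠ -1)
    (Z : LaurentSeries ℤ_[p])
    (hZ : (p : LaurentSeries ℤ_[p]) * Z =
      (HahnSeries.single (-1 : ℤ) (1 : ℤ_[p]) - 1) ^ p -
        HahnSeries.single (-1 : ℤ) (1 : ℤ_[p]) ^ p + 1) :
    ∃ M0 : ToddRing p,
      IsPadicMomentSeq p (fun n =>
        if n = 0 then M0
        else
          algebraMap (LaurentSeries ℤ_[p]) (ToddRing p)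
              (algebraMap ℤ_[p] (LaurentSeries ℤ_[p]) (1 - (c : ℤ_[p]) ^ n)) *
            ∑ m ∈ Finset.Icc 1 n,
              (((-1) ^ (m - 1) * finiteDiff m n / (m : ℤ) : ℤ) : ToddRing p) *
                (tinv p ^ m -
                  (p : ToddRing p) ^ (n - 1) * tinv p ^ (p * m) *
                    Ring.inverse (1 - (p : ToddRing p) *
                      algebraMap (LaurentSeries ℤ_[p]) (ToddRing p) Z) ^ m)) := by
  have hD := one_sub_mul_algebraMap_eq_tinv_pow_sub hZ
  refine ⟨0, ?_⟩
  convert toddSharp_momentSeq_general p (hD ▸ isUnit_one_sub_natCast_mul_algebraMap p Z) c with n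
  split_ifs with hn
  · simp [hn]
  · rw [hD, IsScalarTower.algebraMap_apply ℤ_[p] (LaurentSeries ℤ_[p]) (ToddRing p)]

end
end

section
/- Let p be a prime and let c ∈ ℤ_p^× with c ≠ 1 and c ≠ −1. Let S := ℤ⟦q⟧((t))^∧_p be the p-adic completion of the ring of Laurent series in t over ℤ⟦q⟧, let P be the q-expansion of (2πi)^{−2} times the Weierstrass ℘-function evaluated at z = log(1−t)/(−2πi), namely P := 1/12 + (1−t)·t^{−2} + ∑_{j≥1} ∑_{d≥1} d·q^{jd}·((1−t)^d + (1−t)^{−d} − 2) ∈ S ⊗ ℚ, let D := (1−t)·d/dt (the derivation of S ⊗ ℚ corresponding to (2πi)^{−1}·d/dz), and let φ be the continuous ring endomorphism of S determined by φ(q) = q^p and φ(t) = 1 − (1−t)^p (corresponding to q ↦ q^p and z ↦ p·z). Then there exist M_0, M_1, M_2 ∈ S such that the sequence (M_n)_{n≥0} whose n-th term for every n ≥ 3 is M_n := (1 − c^n)·( (D^{n−2}P) − p^{n−1}·φ(D^{n−2}P) ) ∈ S is an S-valued p-adic moment sequence: for every polynomial f(r) = ∑_{n=0}^N a_n r^n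 with rational coefficients satisfying f(x) ∈ ℤ_p for every x ∈ ℤ_p^×, the element ∑_{n=0}^N a_n·M_n of S ⊗ ℚ lies in the image of S. -/
open scoped TensorProduct

set_option synthInstance.maxHeartbeats 1000000
set_option maxHeartbeats 1000000

noncomputable section

/-- `ℤ⟦q⟧((t))`: Laurent series in `t` over the power series ring `ℤ⟦q⟧` (realized with
`ℤ_p`-coefficients, via the canonical identification of `p`-adic completions). -/
abbrev LaurentT (p : ℕ) [Fact p.Prime] : Type :=
  HahnSeries ℤ (PowerSeries ℤ_[p])

/-- `S = ℤ⟦q⟧((t))^∧_p`, the `p`-adic completion of `ℤ⟦q⟧((t))`. -/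
abbrev WittenRing (p : ℕ) [Fact p.Prime] : Type :=
  AdicCompletion (Ideal.span {(p : LaurentT p)}) (LaurentT p)

/-- The element `q ∈ S`. -/
def qElem (p : ℕ) [Fact p.Prime] : WittenRing p :=
  algebraMap (LaurentT p) (WittenRing p)
    ((HahnSeries.C : PowerSeries ℤ_[p] →+* LaurentT p) PowerSeries.X)

/-- The element `t ∈ S`. -/
def tElem (p : ℕ) [Fact p.Prime] : WittenRing p :=
  algebraMap (LaurentT p) (WittenRing p)
    (HahnSeries.single (1 : ℤ) (1 : PowerSeries ℤ_[p]))

/-- `P − 1/12 = (1−t)·t⁻² + ∑_{j≥1} ∑_{d≥1} d·q^{jd}·((1−t)^d + (1−t)^{−d} − 2)`,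
the non-constant part of the Weierstrass series `P`; it is integral, i.e. lies in
`ℤ⟦q⟧((t))`.  The coefficient of `tᵐ qᴺ` in the double sum is
`∑_{d ∣ N} d·((−1)ᵐ·C(d,m) + C(d−1+m,m) − 2·[m = 0])`. -/
def weierstrassPone (p : ℕ) [Fact p.Prime] : LaurentT p :=
  HahnSeries.single (-2 : ℤ) (1 : PowerSeries ℤ_[p]) -
    HahnSeries.single (-1 : ℤ) (1 : PowerSeries ℤ_[p]) +
    (HahnSeries.ofPowerSeries ℤ (PowerSeries ℤ_[p]))
      (PowerSeries.mk fun m =>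
        PowerSeries.mk fun N =>
          ((∑ d ∈ N.divisors,
              (d : ℤ) * ((-1) ^ m * (d.choose m : ℤ) + ((d - 1 + m).choose m : ℤ) -
                if m = 0 then 2 else 0) : ℤ) : ℤ_[p]))

/-!
Up to a constant `℘ = -ζ'`, and modulo `(p ^ k, q ^ K)` the expansion of `ζ` is a finite sum of
eigenvectors of `D`: the terms in `u ^ (-d)` have weight `d` and those in `u ^ d` have weight `-d`.
For the polar term this rests on `1 / (1 - u) = ∑_{d < p ^ a} u ^ d / (1 - u ^ (p ^ a))`, whose
denominator is a constant of `D` modulo `p ^ a`. Since `φ` sends the components of weight `d` to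
those of weight `p * d`, subtracting the Frobenius term keeps only the weights prime to `p`. Hence
`D^{n-2} ℘ - p^{n-1} φ (D^{n-2} ℘)` is, for `n ≥ 3`, congruent to the `n`-th moment of a finite sum
of point masses on `ℤ_p^×`. As `x ^ ((p - 1) * p ^ k) ≡ 1` modulo `p ^ k` on `ℤ_p^×`, the moments
of low order are `p`-adic limits of those of high order. Finally `1 - c ^ n` is the `n`-th moment
of `δ_1 - δ_c`, and products of moments are moments of multiplicative convolutions.
-/

section Iterates

variable {R M F : Type*} [Ring R] [AddCommGroup M] [Module R M] [FunLike F M M]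
  [AddMonoidHomClass F M M] {N : Submodule R M} {f : F}

theorem map_smodEq_map (hf : ∀ x ∈ N, f x ∈ N) {x y : M} (h : x ≡ y [SMOD N]) :
    f x ≡ f y [SMOD N] := by
  rw [SModEq.sub_mem, ← map_sub]
  exact hf _ (SModEq.sub_mem.1 h)

theorem iterate_smodEq_iterate (hf : ∀ x ∈ N, f x ∈ N) {x y : M} (h : x ≡ y [SMOD N]) (n : ℕ) :
    f^[n] x ≡ f^[n] y [SMOD N] := by
  induction n with
  | zero => exact h
  | succ n ih => simpa only [Function.iterate_succ_apply'] using map_smodEq_map hf ih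

theorem iterate_sum_smodEq_sum_pow_zsmul (hf : ∀ x ∈ N, f x ∈ N) {ι : Type*} {s : Finset ι}
    {x : ι → M} {e : ι → ℤ} (h : ∀ i ∈ s, f (x i) ≡ e i • x i [SMOD N]) (n : ℕ) :
    f^[n] (∑ i ∈ s, x i) ≡ ∑ i ∈ s, e i ^ n • x i [SMOD N] := by
  induction n with
  | zero => simp
  | succ n ih =>
    rw [Function.iterate_succ_apply']
    refine (map_smodEq_map hf ih).trans ?_
    rw [map_sum]
    refine SModEq.sum fun i hi => ?_
    rw [map_zsmul, pow_succ, mul_smul]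
    exact (h i hi).zsmul _

end Iterates

/-! ### Moments of measures on `ℤ_p^×` -/

section Moments

open scoped Polynomial

section Functional

variable {R M : Type*} [CommSemiring R] [AddCommMonoid M] [Module R M]

/-- The linear functional on polynomials with `n`-th moment `m n`: it sends `Xⁿ` to `m n`. -/
def momentFunctional (m : ℕ → M) : R[X] →ₗ[R] M :=
  Polynomial.lsum fun n => LinearMap.toSpanSingleton R M (m n)

theorem momentFunctional_eq_sum (m : ℕ → M) (H : R[X]) :
    momentFunctional m H = ∑ n ∈ H.support, H.coeff n • m n := rfl

@[simp]
theorem momentFunctional_monomial (m : ℕ → M) (n : ℕ) (a : R) :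
    momentFunctional m (Polynomial.monomial n a) = a • m n := by
  simp [momentFunctional]

@[simp]
theorem momentFunctional_X_pow (m : ℕ → M) (n : ℕ) :
    momentFunctional m (Polynomial.X ^ n : R[X]) = m n := by
  rw [Polynomial.X_pow_eq_monomial, momentFunctional_monomial, one_smul]

theorem map_momentFunctional {N : Type*} [AddCommMonoid N] [Module R N] (g : M →ₗ[R] N)
    (m : ℕ → M) (H : R[X]) :
    g (momentFunctional m H) = momentFunctional (fun n => g (m n)) H := by
  simp only [momentFunctional_eq_sum, map_sum, map_smul]

theorem momentFunctional_pow {A : Type*} [Semiring A] [Algebra R A] (x : A) (H : R[X]) :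
    momentFunctional (fun n => x ^ n) H = Polynomial.aeval x H := by
  simp only [momentFunctional_eq_sum, Polynomial.aeval_def, Polynomial.eval₂_eq_sum,
    Polynomial.sum_def, Algebra.smul_def]

theorem momentFunctional_comp_C_mul_X (m : ℕ → M) (x : R) (H : R[X]) :
    momentFunctional m (H.comp (Polynomial.C x * Polynomial.X)) =
      momentFunctional (fun n => x ^ n • m n) H := by
  induction H using Polynomial.induction_on' with
  | add A B hA hB => rw [Polynomial.add_comp, map_add, map_add, hA, hB]
  | monomial n a =>
    rw [Polynomial.monomial_comp, mul_pow, ← Polynomial.C_pow, ← mul_assoc, ← Polynomial.C_mul,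
      Polynomial.C_mul_X_pow_eq_monomial, momentFunctional_monomial, momentFunctional_monomial,
      mul_smul]

theorem momentFunctional_X_pow_mul (m : ℕ → M) (e : ℕ) (H : R[X]) :
    momentFunctional m (Polynomial.X ^ e * H) = momentFunctional (fun n => m (n + e)) H := by
  induction H using Polynomial.induction_on' with
  | add A B hA hB => rw [mul_add, map_add, map_add, hA, hB]
  | monomial n a => simp [Polynomial.X_pow_mul_monomial]

theorem momentFunctional_map_algebraMap {R' : Type*} [CommSemiring R'] [Algebra R R'] [Module R' M]
    [IsScalarTower R R' M] (m : ℕ → M) (H : R[X]) :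
    momentFunctional m (H.map (algebraMap R R')) = momentFunctional m H := by
  induction H using Polynomial.induction_on' with
  | add A B hA hB => rw [Polynomial.map_add, map_add, map_add, hA, hB]
  | monomial n a => simp only [Polynomial.map_monomial, momentFunctional_monomial, algebraMap_smul]

end Functional

variable (p : ℕ) [Fact p.Prime] {S : Type*} [CommRing S] [Algebra ℤ_[p] S]

/-- The ideal of polynomials over `ℤ_p` whose values on `ℤ_p^×` are divisible by `p ^ k`. -/
def unitDivisibleIdeal (k : ℕ) : Ideal ℤ_[p][X] :=
  ⨅ x : ℤ_[p]ˣ, (Ideal.span {(p : ℤ_[p]) ^ k}).comap (Polynomial.evalRingHom (x : ℤ_[p]))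

/-- The sequences in `S` which are, modulo `I`, the moments of a measure on `ℤ_p^×` with values in
`ℤ/p^k`: the moment functional maps polynomials divisible by `p ^ k` on `ℤ_p^×` into `I`. -/
def unitMoments (k : ℕ) (I : Ideal S) : Submodule S (ℕ → S) where
  carrier := {m | ∀ H ∈ unitDivisibleIdeal p k, momentFunctional m H ∈ I}
  zero_mem' H _ := by simp [momentFunctional_eq_sum]
  add_mem' {m m'} hm hm' H hH := by
    simpa [momentFunctional_eq_sum, Finset.sum_add_distrib] using I.add_mem (hm H hH) (hm' H hH)
  smul_mem' s m hm H hH := by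
    have hs := map_momentFunctional (LinearMap.mulLeft ℤ_[p] s) m H
    exact hs ▸ I.mul_mem_left s (hm H hH)

/-- The congruence form of `IsPadicMomentSeq`, with `ℤ_p`-coefficients: whenever a polynomial is
divisible by `p ^ k` on `ℤ_p^×`, so is the corresponding combination of moments. Unlike
`IsPadicMomentSeq` it can be tested modulo one power of `p` at a time. -/
def IsUnitMomentSeq (m : ℕ → S) : Prop :=
  ∀ k, m ∈ unitMoments p k (Ideal.span {(p : S) ^ k})

variable {p} {k : ℕ} {I : Ideal S}

theorem mem_unitDivisibleIdeal {H : ℤ_[p][X]} :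
    H ∈ unitDivisibleIdeal p k ↔ ∀ x : ℤ_[p]ˣ, (p : ℤ_[p]) ^ k ∣ H.eval (x : ℤ_[p]) := by
  simp [unitDivisibleIdeal, Ideal.mem_span_singleton]

theorem padicInt_pow_dvd_units_pow_sub_one (x : ℤ_[p]ˣ) (k : ℕ) :
    (p : ℤ_[p]) ^ k ∣ (x : ℤ_[p]) ^ ((p - 1) * p ^ k) - 1 := by
  have hfermat : (p : ℤ_[p]) ∣ (x : ℤ_[p]) ^ (p - 1) - 1 := by
    rw [← Ideal.mem_span_singleton, ← PadicInt.maximalIdeal_eq_span_p, ← PadicInt.ker_toZMod,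
      RingHom.mem_ker, map_sub, map_pow, map_one,
      ZMod.pow_card_sub_one_eq_one (x.isUnit.map PadicInt.toZMod).ne_zero, sub_self]
  simpa [pow_mul] using (pow_dvd_pow _ k.le_succ).trans (dvd_sub_pow_of_dvd_sub hfermat k)

theorem X_pow_sub_one_mem_unitDivisibleIdeal (k e : ℕ) :
    (Polynomial.X ^ ((p - 1) * p ^ k * e) - 1 : ℤ_[p][X]) ∈ unitDivisibleIdeal p k := by
  refine mem_unitDivisibleIdeal.2 fun x => (padicInt_pow_dvd_units_pow_sub_one x k).trans ?_
  simpa [pow_mul] using sub_one_dvd_pow_sub_one _ e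

theorem mem_unitMoments_of_smodEq {m m' : ℕ → S} (h : ∀ n, m n ≡ m' n [SMOD I])
    (hm' : m' ∈ unitMoments p k I) : m ∈ unitMoments p k I := fun H hH => by
  have hcongr : momentFunctional m H ≡ momentFunctional m' H [SMOD I] := by
    simp only [momentFunctional_eq_sum, Algebra.smul_def]
    exact SModEq.sum fun n _ => SModEq.rfl.mul (h n)
  exact SModEq.zero.1 (hcongr.trans (SModEq.zero.2 (hm' H hH)))

theorem algebraMap_units_pow_mem_unitMoments (hI : (p : S) ^ k ∈ I) (x : ℤ_[p]ˣ) :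
    (fun n => algebraMap ℤ_[p] S x ^ n) ∈ unitMoments p k I := fun H hH => by
  rw [momentFunctional_pow, Polynomial.aeval_algebraMap_apply, Polynomial.coe_aeval_eq_eval]
  refine I.mem_of_dvd ?_ hI
  simpa only [map_pow, map_natCast] using
    map_dvd (algebraMap ℤ_[p] S) (mem_unitDivisibleIdeal.1 hH x)

theorem padicInt_isUnit_intCast {e : ℤ} : IsUnit (e : ℤ_[p]) ↔ ¬ (p : ℤ) ∣ e := by
  rw [← not_iff_not, not_not, PadicInt.not_isUnit_iff, PadicInt.norm_int_lt_one_iff_dvd]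

theorem intCast_pow_mem_unitMoments (hI : (p : S) ^ k ∈ I) {e : ℤ} (he : ¬ (p : ℤ) ∣ e) :
    (fun n => (e : S) ^ n) ∈ unitMoments p k I := by
  obtain ⟨x, hx⟩ := padicInt_isUnit_intCast.2 he
  simpa [hx] using algebraMap_units_pow_mem_unitMoments hI x

theorem isUnitMomentSeq_one_sub_pow (c : ℤ_[p]ˣ) :
    IsUnitMomentSeq p fun n => 1 - (c : ℤ_[p]) ^ n := fun k => by
  have hp : (p : ℤ_[p]) ^ k ∈ Ideal.span {(p : ℤ_[p]) ^ k} := Ideal.mem_span_singleton_self _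
  convert sub_mem (algebraMap_units_pow_mem_unitMoments hp 1)
    (algebraMap_units_pow_mem_unitMoments hp c) using 1
  ext n
  simp

theorem comp_C_mul_X_mem_unitDivisibleIdeal {H : ℤ_[p][X]} (hH : H ∈ unitDivisibleIdeal p k)
    (x : ℤ_[p]ˣ) : H.comp (Polynomial.C (x : ℤ_[p]) * Polynomial.X) ∈ unitDivisibleIdeal p k :=
  mem_unitDivisibleIdeal.2 fun y => by simpa using mem_unitDivisibleIdeal.1 hH (x * y)

theorem IsUnitMomentSeq.smul {w : ℕ → ℤ_[p]} {m : ℕ → S} (hw : IsUnitMomentSeq p w)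
    (hm : IsUnitMomentSeq p m) : IsUnitMomentSeq p fun n => w n • m n := fun k H hH => by
  -- The multiplicative convolution of the two measures: integrate `x ↦ ∫ H (x * y) dw(y)`.
  let G : ℤ_[p][X] := momentFunctional (fun n => Polynomial.monomial n (w n)) H
  have hG : G ∈ unitDivisibleIdeal p k := mem_unitDivisibleIdeal.2 fun x => by
    have hx := hw k _ (comp_C_mul_X_mem_unitDivisibleIdeal hH x)
    rw [Ideal.mem_span_singleton] at hx
    rw [momentFunctional_comp_C_mul_X] at hx
    convert hx using 1
    rw [← Polynomial.leval_apply, map_momentFunctional]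
    simp only [Polynomial.leval_apply, Polynomial.eval_monomial, smul_eq_mul, mul_comm]
  convert hm k G hG using 1
  rw [map_momentFunctional]
  simp only [momentFunctional_monomial]

theorem shift_mem_unitMoments {m : ℕ → S} (hm : m ∈ unitMoments p k I) (e : ℕ) :
    (fun n => m (n + e)) ∈ unitMoments p k I := fun H hH => by
  rw [← momentFunctional_X_pow_mul]
  exact hm _ (Ideal.mul_mem_left _ _ hH)

theorem add_period_smodEq_of_mem_unitMoments {m : ℕ → S} (hm : m ∈ unitMoments p k I) (n e : ℕ) :
    m (n + (p - 1) * p ^ k * e) ≡ m n [SMOD I] := by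
  have hX := hm _ <|
    Ideal.mul_mem_left _ (Polynomial.X ^ n) (X_pow_sub_one_mem_unitDivisibleIdeal k e)
  rwa [mul_sub, mul_one, ← pow_add, map_sub, momentFunctional_X_pow, momentFunctional_X_pow,
    ← SModEq.sub_mem] at hX

variable (p) in
theorem le_period_mul (k m : ℕ) : m ≤ (p - 1) * p ^ k * m :=
  have hp : p.Prime := Fact.out
  Nat.le_mul_of_pos_left m (Nat.mul_pos (Nat.sub_pos_of_lt hp.one_lt) (pow_pos hp.pos k))

theorem add_period_smodEq_add_period {M : ℕ → S} {m : ℕ}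
    (hM : (fun n => M (n + m)) ∈ unitMoments p k I) (n : ℕ) {l : ℕ} (hkl : k ≤ l) :
    M (n + (p - 1) * p ^ k * m) ≡ M (n + (p - 1) * p ^ l * m) [SMOD I] := by
  obtain ⟨s, hs⟩ := Nat.exists_eq_add_of_le (le_period_mul p k m)
  obtain ⟨j, rfl⟩ := Nat.exists_eq_add_of_le hkl
  obtain ⟨r, hr⟩ := Nat.exists_eq_add_of_le (Nat.one_le_pow j p (Fact.out : p.Prime).pos)
  have hl : (p - 1) * p ^ (k + j) * m = s + (p - 1) * p ^ k * (m * r) + m := by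
    calc (p - 1) * p ^ (k + j) * m = (p - 1) * p ^ k * m * p ^ j := by ring
      _ = (p - 1) * p ^ k * m + (p - 1) * p ^ k * (m * r) := by rw [hr]; ring
      _ = s + (p - 1) * p ^ k * (m * r) + m := by rw [hs]; ring
  have h := (add_period_smodEq_of_mem_unitMoments hM (n + s) (m * r)).symm
  simpa only [hs, hl, add_assoc, add_comm m] using h

/-- The missing moments are the `p`-adic limits of `M (n + (p - 1) * p ^ k * m)` as `k → ∞`. -/
theorem IsUnitMomentSeq.exists_extension [IsPrecomplete (Ideal.span {(p : S)}) S] {M : ℕ → S}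
    {m : ℕ} (hM : IsUnitMomentSeq p fun n => M (n + m)) :
    ∃ y : ℕ → S, IsUnitMomentSeq p fun n => if n < m then y n else M n := by
  have hlim (n : ℕ) :
      ∃ y, ∀ k, M (n + (p - 1) * p ^ k * m) ≡ y [SMOD Ideal.span {(p : S) ^ k}] := by
    simpa only [Ideal.span_singleton_pow, smul_eq_mul, Ideal.mul_top] using
      IsPrecomplete.prec' (I := Ideal.span {(p : S)}) (fun k => M (n + (p - 1) * p ^ k * m))
        fun {k l} hkl => by
          simpa only [Ideal.span_singleton_pow, smul_eq_mul, Ideal.mul_top] using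
            add_period_smodEq_add_period (hM k) n hkl
  choose y hy using hlim
  refine ⟨y, fun k => mem_unitMoments_of_smodEq
    (m' := fun n => M (n + (p - 1) * p ^ k * m)) (fun n => ?_) ?_⟩
  · by_cases hn : n < m
    · simpa only [if_pos hn] using (hy n k).symm
    · obtain ⟨n, rfl⟩ := Nat.exists_eq_add_of_le (not_lt.1 hn)
      simp only [if_neg hn]
      convert (add_period_smodEq_of_mem_unitMoments (hM k) n m).symm using 2 <;> ring
  · obtain ⟨s, hs⟩ := Nat.exists_eq_add_of_le (le_period_mul p k m)
    simpa only [hs, add_assoc, add_comm m] using shift_mem_unitMoments (hM k) s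

theorem exists_eq_inv_smul_map_intCast (f : ℚ[X]) :
    ∃ b : ℤ, b ≠ 0 ∧ ∃ F : ℤ[X], f = (b : ℚ)⁻¹ • F.map (algebraMap ℤ ℚ) := by
  obtain ⟨b, hb, hF⟩ := IsLocalization.integerNormalization_spec (nonZeroDivisors ℤ) f
  have hb0 : b ≠ 0 := nonZeroDivisors.ne_zero hb
  refine ⟨b, hb0, IsLocalization.integerNormalization (nonZeroDivisors ℤ) f, ?_⟩
  rw [hF, ← Int.cast_smul_eq_zsmul ℚ, inv_smul_smul₀ (Int.cast_ne_zero.2 hb0)]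

theorem sum_tmul_coeff_smul_map_intCast {A : Type*} [CommRing A] (M : ℕ → A) (F : ℤ[X]) (r : ℚ) :
    ∑ n ∈ (r • F.map (algebraMap ℤ ℚ)).support, M n ⊗ₜ[ℤ] (r • F.map (algebraMap ℤ ℚ)).coeff n =
      momentFunctional M F ⊗ₜ[ℤ] r := by
  rw [momentFunctional_eq_sum, TensorProduct.sum_tmul]
  refine (Polynomial.sum_eq_of_subset (fun n a => M n ⊗ₜ[ℤ] a)
    (fun n => TensorProduct.tmul_zero _ _)
    ((Polynomial.support_smul r _).trans (Polynomial.support_map_subset _ F))).trans ?_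
  refine Finset.sum_congr rfl fun n _ => ?_
  rw [TensorProduct.smul_tmul, Polynomial.coeff_smul, Polynomial.coeff_map, zsmul_eq_mul,
    smul_eq_mul, mul_comm, eq_intCast]

theorem intCast_dvd_aeval_of_norm_aeval_le_one {b : ℤ} (hb : b ≠ 0) {F : ℤ[X]} {x : ℤ_[p]}
    (hx : ‖Polynomial.aeval (x : ℚ_[p]) ((b : ℚ)⁻¹ • F.map (algebraMap ℤ ℚ))‖ ≤ 1) :
    (b : ℤ_[p]) ∣ Polynomial.aeval x F := by
  obtain ⟨g, hg⟩ : ∃ g : ℤ_[p], (g : ℚ_[p]) =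
    Polynomial.aeval (x : ℚ_[p]) ((b : ℚ)⁻¹ • F.map (algebraMap ℤ ℚ)) := ⟨⟨_, hx⟩, rfl⟩
  refine ⟨g, PadicInt.ext ?_⟩
  have hcoe : ((Polynomial.aeval x F : ℤ_[p]) : ℚ_[p]) = Polynomial.aeval (x : ℚ_[p]) F :=
    (Polynomial.aeval_algebraMap_apply ℚ_[p] x F).symm
  rw [PadicInt.coe_mul, hg, hcoe, map_smul, Polynomial.aeval_map_algebraMap, Algebra.smul_def]
  simp [hb]

theorem IsUnitMomentSeq.exists_momentFunctional_eq_zsmul {M : ℕ → S} (hM : IsUnitMomentSeq p M)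
    {b : ℤ} (hb : b ≠ 0) {F : ℤ[X]}
    (hF : ∀ x : ℤ_[p]ˣ, (b : ℤ_[p]) ∣ Polynomial.aeval (x : ℤ_[p]) F) :
    ∃ y, momentFunctional M F = b • y := by
  have hb' : (b : ℤ_[p]) ≠ 0 := Int.cast_ne_zero.2 hb
  obtain ⟨k, w, hbk⟩ : ∃ (k : ℕ) (w : ℤ_[p]ˣ), (b : ℤ_[p]) = w * (p : ℤ_[p]) ^ k :=
    ⟨_, _, PadicInt.unitCoeff_spec hb'⟩
  have hmem : F.map (algebraMap ℤ ℤ_[p]) ∈ unitDivisibleIdeal p k :=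
    mem_unitDivisibleIdeal.2 fun x => by
      rw [Polynomial.eval_map_algebraMap]
      exact (Dvd.intro_left _ hbk.symm).trans (hF x)
  obtain ⟨z, hz⟩ := Ideal.mem_span_singleton.1 (hM k _ hmem)
  refine ⟨(↑w⁻¹ : ℤ_[p]) • z, ?_⟩
  rw [← momentFunctional_map_algebraMap (R' := ℤ_[p]), hz, ← Int.cast_smul_eq_zsmul ℤ_[p], hbk,
    smul_smul, mul_right_comm, Units.mul_inv, one_mul, Algebra.smul_def, map_pow, map_natCast]

theorem IsUnitMomentSeq.isPadicMomentSeq {M : ℕ → S} (hM : IsUnitMomentSeq p M) :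
    IsPadicMomentSeq p M := fun f hf => by
  obtain ⟨b, hb, F, rfl⟩ := exists_eq_inv_smul_map_intCast f
  obtain ⟨y, hy⟩ := hM.exists_momentFunctional_eq_zsmul hb fun x =>
    intCast_dvd_aeval_of_norm_aeval_le_one hb (hf x)
  refine ⟨y, ?_⟩
  rw [sum_tmul_coeff_smul_map_intCast, hy, TensorProduct.smul_tmul, zsmul_eq_mul,
    mul_inv_cancel₀ (Int.cast_ne_zero.2 hb)]

end Moments

/-! ### The Weierstrass zeta function of the Tate curve -/

section Tate

open Finset

theorem sum_range_mul_sub_sum_range {M : Type*} [AddCommGroup M] {p : ℕ} (hp : 0 < p) (f : ℕ → M)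
    (L : ℕ) :
    ∑ d ∈ range (p * L), f d - ∑ d ∈ range L, f (p * d) =
      ∑ d ∈ range (p * L) with ¬ p ∣ d, f d := by
  have hmul : ∑ d ∈ range (p * L) with p ∣ d, f d = ∑ d ∈ range L, f (p * d) := by
    refine (sum_bij (fun d _ => p * d) (fun d hd => ?_) (fun d _ e _ h => ?_) (fun d hd => ?_)
      fun _ _ => rfl).symm
    · simpa [hp] using hd
    · exact Nat.eq_of_mul_eq_mul_left hp h
    · obtain ⟨hd, e, rfl⟩ := mem_filter.1 hd
      exact ⟨e, by simpa [hp] using hd, rfl⟩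
  rw [← hmul, sub_eq_iff_eq_add', sum_filter_add_sum_filter_not]

variable {S : Type*} [CommRing S]

/-- `P` has the `q`-expansion `u / (1 - u) ^ 2 + ∑_{j, d ≥ 1} d q ^ (j d) (u ^ d + u ^ (-d) - 2)` of
the Weierstrass function of the Tate curve, where `s` stands for `1 / (1 - u)`. Convergence is
expressed by congruences modulo powers of `q`, so that no topology on `S` is needed. -/
def IsWeierstrassExpansion (q : S) (u : Sˣ) (s P : S) : Prop :=
  ∀ K N, K ≤ N → q ^ K ∣ P - (u * s ^ 2 +
    ∑ d ∈ range N, ∑ j ∈ Ico 1 K, (d : S) * q ^ (j * d) * ((u : S) ^ d + (↑u⁻¹ : S) ^ d - 2))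

/-- The component of weight `d` of the Weierstrass zeta function of the Tate curve modulo `q ^ K`:
it is multiplied by `d` under the derivation with `D q = 0` and `D u = -u`. -/
def zetaPos (q : S) (u : Sˣ) (K d : ℕ) : S :=
  (↑u⁻¹ : S) ^ d * ∑ j ∈ Ico 1 K, q ^ (j * d)

/-- The component of weight `-d`, for `0 ≤ d < N`, of the Weierstrass zeta function of the Tate
curve modulo `q ^ K` and `N`. The parameter `σ` stands for `1 / (1 - u ^ N)`, which is a constant
of the derivation modulo `N`; it enters through `1 / (1 - u) = ∑_{d < N} u ^ d / (1 - u ^ N)`. -/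
def zetaNeg (q : S) (u : Sˣ) (σ : S) (K d : ℕ) : S :=
  -((u : S) ^ d * (σ + ∑ j ∈ Ico 1 K, q ^ (j * d)))

theorem eq_sum_range_pow_mul {u s σ : S} {N : ℕ} (hs : (1 - u) * s = 1)
    (hσ : (1 - u ^ N) * σ = 1) : s = ∑ d ∈ range N, u ^ d * σ := by
  rw [← sum_mul]
  linear_combination (-s) * hσ + (∑ d ∈ range N, u ^ d) * σ * hs - s * σ * mul_neg_geom_sum u N

theorem IsWeierstrassExpansion.map {S' : Type*} [CommRing S'] {q s P : S} {u : Sˣ}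
    (h : IsWeierstrassExpansion q u s P) (f : S →+* S') :
    IsWeierstrassExpansion (f q) (Units.map f u) (f s) (f P) := fun K N hKN => by
  simpa [map_ofNat f 2] using map_dvd f (h K N hKN)

section Derivation

variable {D : Derivation ℤ S S} {q s P : S} {u : Sˣ}

theorem derivation_pow_of_eq_intCast_mul {x : S} {e : ℤ} (hx : D x = e * x) (n : ℕ) :
    D (x ^ n) = ((n * e : ℤ) : S) * x ^ n := by
  rcases n with _ | n
  · simp
  · rw [D.leibniz_pow, hx, Nat.add_sub_cancel, smul_eq_mul, nsmul_eq_mul]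
    push_cast
    ring

theorem derivation_unit_pow (hDu : D u = -u) (d : ℕ) : D ((u : S) ^ d) = -d * (u : S) ^ d := by
  simpa using derivation_pow_of_eq_intCast_mul (x := (u : S)) (e := -1) (by simpa using hDu) d

theorem derivation_inv_unit_pow (hDu : D u = -u) (d : ℕ) :
    D ((↑u⁻¹ : S) ^ d) = d * (↑u⁻¹ : S) ^ d := by
  have hinv : D (↑u⁻¹ : S) = (↑u⁻¹ : S) := by
    rw [D.leibniz_of_mul_eq_one u.inv_mul, hDu]
    simp [sq]
  simpa using derivation_pow_of_eq_intCast_mul (x := (↑u⁻¹ : S)) (e := 1) (by simpa using hinv) d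

theorem derivation_pow_eq_zero (hDq : D q = 0) (n : ℕ) : D (q ^ n) = 0 := by
  rw [D.leibniz_pow, hDq, smul_zero, smul_zero]

theorem derivation_of_one_sub_unit_pow_mul_eq_one (hDu : D u = -u) {σ : S} {N : ℕ}
    (hσ : (1 - (u : S) ^ N) * σ = 1) : D σ = -(N * (u : S) ^ N * σ ^ 2) := by
  rw [D.leibniz_of_mul_eq_one ((mul_comm _ _).trans hσ), map_sub, D.map_one_eq_zero,
    derivation_unit_pow hDu, smul_eq_mul]
  ring

theorem derivation_zetaPos (hDq : D q = 0) (hDu : D u = -u) (K d : ℕ) :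
    D (zetaPos q u K d) = d * zetaPos q u K d := by
  rw [zetaPos, D.leibniz, derivation_inv_unit_pow hDu, map_sum,
    sum_eq_zero fun j _ => derivation_pow_eq_zero hDq _]
  simp only [smul_eq_mul]
  ring

theorem derivation_zetaNeg (hDq : D q = 0) (hDu : D u = -u) (σ : S) (K d : ℕ) :
    D (zetaNeg q u σ K d) = -d * zetaNeg q u σ K d - (u : S) ^ d * D σ := by
  rw [zetaNeg, map_neg, D.leibniz, derivation_unit_pow hDu, map_add, map_sum,
    sum_eq_zero fun j _ => derivation_pow_eq_zero hDq _]
  simp only [smul_eq_mul]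
  ring

/-- The identity `℘ = -ζ'`; the constant term of the expansion of `℘` is the one killed by `D`. -/
theorem derivation_sum_zetaPos_add_sum_zetaNeg (hDq : D q = 0) (hDu : D u = -u)
    (hs : (1 - (u : S)) * s = 1) {σ : S} {N : ℕ} (hσ : (1 - (u : S) ^ N) * σ = 1) (K : ℕ) :
    D (∑ d ∈ range N, zetaPos q u K d + ∑ d ∈ range N, zetaNeg q u σ K d) =
      u * s ^ 2 +
        ∑ d ∈ range N, ∑ j ∈ Ico 1 K, (d : S) * q ^ (j * d) * ((u : S) ^ d + (↑u⁻¹ : S) ^ d - 2) +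
        ∑ d ∈ range N, ∑ j ∈ Ico 1 K, 2 * (d : S) * q ^ (j * d) := by
  have hDs : u * s ^ 2 = ∑ d ∈ range N, (d * (u : S) ^ d * σ - (u : S) ^ d * D σ) := by
    have h : D s = -(u * s ^ 2) := by
      rw [D.leibniz_of_mul_eq_one ((mul_comm _ _).trans hs), map_sub, D.map_one_eq_zero, hDu,
        smul_eq_mul]
      ring
    rw [← neg_eq_iff_eq_neg.2 h, eq_sum_range_pow_mul hs hσ, map_sum, ← sum_neg_distrib]
    refine sum_congr rfl fun d _ => ?_
    rw [D.leibniz, derivation_unit_pow hDu, smul_eq_mul, smul_eq_mul]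
    ring
  rw [hDs, map_add, map_sum, map_sum, ← sum_add_distrib, ← sum_add_distrib, ← sum_add_distrib]
  refine sum_congr rfl fun d _ => ?_
  rw [derivation_zetaPos hDq hDu, derivation_zetaNeg hDq hDu, zetaPos, zetaNeg, ← sum_mul,
    ← mul_sum, ← mul_sum]
  ring

/-- The contribution of the weights `d` and `-d` to the `n`-th derivative of the Weierstrass zeta
function: the `n`-th moment of point masses `zetaPos` at `d` and `zetaNeg` at `-d`. -/
def zetaMoment (q : S) (u : Sˣ) (σ : S) (K n d : ℕ) : S :=
  (d : ℤ) ^ n • zetaPos q u K d + (-d : ℤ) ^ n • zetaNeg q u σ K d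

section Congruence

variable {I : Ideal S} {σ : S} {K N : ℕ}

theorem derivation_smodEq_derivation_derivation_zeta (hDI : ∀ x ∈ I, D x ∈ I) (hDq : D q = 0)
    (hDu : D u = -u) (hs : (1 - (u : S)) * s = 1) (hP : IsWeierstrassExpansion q u s P)
    (hσ : (1 - (u : S) ^ N) * σ = 1) (hKN : K ≤ N) (hK : q ^ K ∈ I) :
    D P ≡ D (D (∑ d ∈ range N, zetaPos q u K d + ∑ d ∈ range N, zetaNeg q u σ K d)) [SMOD I] := by
  have hconst : D (∑ d ∈ range N, ∑ j ∈ Ico 1 K, 2 * (d : S) * q ^ (j * d)) = 0 := by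
    rw [map_sum]
    refine sum_eq_zero fun d _ => ?_
    rw [map_sum]
    refine sum_eq_zero fun j _ => ?_
    have h2d : D (2 * (d : S)) = 0 := by exact_mod_cast D.map_natCast (2 * d)
    rw [D.leibniz, derivation_pow_eq_zero hDq, h2d, smul_zero, smul_zero, add_zero]
  rw [derivation_sum_zetaPos_add_sum_zetaNeg hDq hDu hs hσ K, map_add, hconst, add_zero]
  exact map_smodEq_map hDI (SModEq.sub_mem.2 (I.mem_of_dvd (hP K N hKN) hK))

theorem derivation_zetaNeg_smodEq (hDq : D q = 0) (hDu : D u = -u)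
    (hσ : (1 - (u : S) ^ N) * σ = 1) (hN : (N : S) ∈ I) (d : ℕ) :
    D (zetaNeg q u σ K d) ≡ (-d : ℤ) • zetaNeg q u σ K d [SMOD I] := by
  rw [SModEq.sub_mem, derivation_zetaNeg hDq hDu,
    derivation_of_one_sub_unit_pow_mul_eq_one hDu hσ]
  refine I.mem_of_dvd ⟨(u : S) ^ d * (u : S) ^ N * σ ^ 2, ?_⟩ hN
  simp only [zsmul_eq_mul, Int.cast_neg, Int.cast_natCast]
  ring

theorem iterate_derivation_smodEq_sum_zetaMoment (hDI : ∀ x ∈ I, D x ∈ I) (hDq : D q = 0)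
    (hDu : D u = -u) (hs : (1 - (u : S)) * s = 1) (hP : IsWeierstrassExpansion q u s P)
    (hσ : (1 - (u : S) ^ N) * σ = 1) (hKN : K ≤ N) (hN : (N : S) ∈ I) (hK : q ^ K ∈ I) (n : ℕ) :
    D^[n + 1] P ≡ ∑ d ∈ range N, zetaMoment q u σ K (n + 2) d [SMOD I] := by
  have hpos := iterate_sum_smodEq_sum_pow_zsmul hDI (s := range N) (x := zetaPos q u K)
    (e := fun d => d) (fun d _ => by simp [derivation_zetaPos hDq hDu]) (n + 2)
  have hneg := iterate_sum_smodEq_sum_pow_zsmul hDI (s := range N) (x := zetaNeg q u σ K)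
    (e := fun d => -d) (fun d _ => derivation_zetaNeg_smodEq hDq hDu hσ hN d) (n + 2)
  have hDP := iterate_smodEq_iterate hDI
    (derivation_smodEq_derivation_derivation_zeta hDI hDq hDu hs hP hσ hKN hK) n
  rw [← Function.iterate_succ_apply, ← Function.iterate_succ_apply, ← Function.iterate_succ_apply,
    iterate_map_add] at hDP
  simpa only [zetaMoment, sum_add_distrib] using hDP.trans (hpos.add hneg)

end Congruence

end Derivation

section Frobenius

variable {p : ℕ} {φ : S →+* S} {q : S} {u : Sˣ}

theorem map_zetaMoment (hφq : φ q = q ^ p) (hφu : φ u = (u : S) ^ p) (σ : S) (K n d : ℕ) :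
    (p : S) ^ n * φ (zetaMoment q u σ K n d) = zetaMoment q u (φ σ) K n (p * d) := by
  have hunit : Units.map (φ : S →* S) u = u ^ p := Units.ext hφu
  have hφu' : φ (↑u⁻¹ : S) = (↑u⁻¹ : S) ^ p := by
    simpa using congrArg (fun v : Sˣ => (↑v⁻¹ : S)) hunit
  simp only [zetaMoment, zetaPos, zetaNeg, map_add, map_neg, map_mul, map_zsmul, map_sum, map_pow,
    hφq, hφu, hφu', ← pow_mul, mul_left_comm p]
  simp only [zsmul_eq_mul]
  push_cast
  ring

theorem one_sub_pow_mul_iterate_eq_one (hφu : φ u = (u : S) ^ p) {s : S}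
    (hs : (1 - (u : S)) * s = 1) (a : ℕ) : (1 - (u : S) ^ p ^ a) * φ^[a] s = 1 := by
  induction a with
  | zero => simpa using hs
  | succ a ih =>
    have h := congrArg φ ih
    rw [map_mul, map_sub, map_pow, hφu, map_one, ← pow_mul, ← pow_succ'] at h
    rwa [Function.iterate_succ_apply']

theorem depletion_smodEq_sum_zetaMoment (hp : 0 < p) {D : Derivation ℤ S S} {s P : S} {I : Ideal S}
    (hDI : ∀ x ∈ I, D x ∈ I) (hφI : ∀ x ∈ I, φ x ∈ I) (hDq : D q = 0) (hDu : D u = -u)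
    (hφq : φ q = q ^ p) (hφu : φ u = (u : S) ^ p) (hs : (1 - (u : S)) * s = 1)
    (hP : IsWeierstrassExpansion q u s P) {a K : ℕ} (ha : (p : S) ^ a ∈ I) (hKa : K ≤ p ^ a)
    (hK : q ^ K ∈ I) (n : ℕ) :
    D^[n + 1] P - (p : S) ^ (n + 2) * φ (D^[n + 1] P) ≡
      ∑ d ∈ range (p * p ^ a) with ¬ p ∣ d, zetaMoment q u (φ^[a + 1] s) K (n + 2) d [SMOD I] := by
  have hσ := one_sub_pow_mul_iterate_eq_one hφu hs
  have hfull : D^[n + 1] P ≡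
      ∑ d ∈ range (p * p ^ a), zetaMoment q u (φ^[a + 1] s) K (n + 2) d [SMOD I] := by
    rw [← pow_succ']
    exact iterate_derivation_smodEq_sum_zetaMoment hDI hDq hDu hs hP (hσ (a + 1))
      (hKa.trans (Nat.pow_le_pow_right hp a.le_succ))
      (by rw [Nat.cast_pow, pow_succ]; exact I.mul_mem_right _ ha) hK n
  have hfrob : (p : S) ^ (n + 2) * φ (D^[n + 1] P) ≡
      ∑ d ∈ range (p ^ a), zetaMoment q u (φ^[a + 1] s) K (n + 2) (p * d) [SMOD I] := by
    have h := map_smodEq_map hφI (iterate_derivation_smodEq_sum_zetaMoment hDI hDq hDu hs hP (hσ a)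
      hKa (by rwa [Nat.cast_pow]) hK n)
    simpa only [map_sum, mul_sum, map_zetaMoment hφq hφu, ← Function.iterate_succ_apply' φ] using
      (SModEq.refl ((p : S) ^ (n + 2))).mul h
  rw [← sum_range_mul_sub_sum_range hp]
  exact hfull.sub hfrob

variable (p q) in
theorem derivation_mem_span_pair {D : Derivation ℤ S S} (hDq : D q = 0) (k K : ℕ) :
    ∀ x ∈ Ideal.span {(p : S) ^ k, q ^ K}, D x ∈ Ideal.span {(p : S) ^ k, q ^ K} := by
  intro x hx
  obtain ⟨a, b, rfl⟩ := Ideal.mem_span_pair.1 hx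
  refine Ideal.mem_span_pair.2 ⟨D a, D b, ?_⟩
  simp [derivation_pow_eq_zero hDq, D.leibniz_pow, mul_comm]

theorem map_mem_span_pair (hp : 0 < p) (hφq : φ q = q ^ p) (k K : ℕ) :
    ∀ x ∈ Ideal.span {(p : S) ^ k, q ^ K}, φ x ∈ Ideal.span {(p : S) ^ k, q ^ K} := by
  intro x hx
  obtain ⟨a, b, rfl⟩ := Ideal.mem_span_pair.1 hx
  obtain ⟨r, hr⟩ := pow_dvd_pow q (Nat.le_mul_of_pos_left K hp)
  refine Ideal.mem_span_pair.2 ⟨φ a, φ b * r, ?_⟩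
  rw [map_add, map_mul, map_mul, map_pow, map_pow, map_natCast, hφq, ← pow_mul, hr]
  ring

end Frobenius

theorem zetaMoment_mem_unitMoments {p : ℕ} [Fact p.Prime] [Algebra ℤ_[p] S] {I : Ideal S} {k : ℕ}
    (hI : (p : S) ^ k ∈ I) (q : S) (u : Sˣ) (σ : S) (K : ℕ) {d : ℕ} (hd : ¬ p ∣ d) :
    (fun n => zetaMoment q u σ K n d) ∈ unitMoments p k I := by
  have hd' : ¬ (p : ℤ) ∣ d := by exact_mod_cast hd
  convert add_mem
    (Submodule.smul_mem _ (zetaPos q u K d) (intCast_pow_mem_unitMoments hI hd'))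
    (Submodule.smul_mem _ (zetaNeg q u σ K d)
      (intCast_pow_mem_unitMoments hI ((dvd_neg (b := (d : ℤ))).not.2 hd'))) using 1
  ext n
  simp [zetaMoment, mul_comm]

theorem sum_zetaMoment_mem_unitMoments {p : ℕ} [Fact p.Prime] [Algebra ℤ_[p] S] {I : Ideal S}
    {k : ℕ} (hI : (p : S) ^ k ∈ I) (q : S) (u : Sˣ) (σ : S) (K : ℕ) {W : Finset ℕ}
    (hW : ∀ d ∈ W, ¬ p ∣ d) :
    (fun n => ∑ d ∈ W, zetaMoment q u σ K n d) ∈ unitMoments p k I := by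
  rw [← Finset.sum_fn]
  exact Submodule.sum_mem _ fun d hd => zetaMoment_mem_unitMoments hI q u σ K (hW d hd)

theorem isUnitMomentSeq_depletion {p : ℕ} [Fact p.Prime] [Algebra ℤ_[p] S] {q : S}
    (hsep : ∀ k x, (∀ K, x ∈ Ideal.span {(p : S) ^ k, q ^ K}) → (p : S) ^ k ∣ x)
    {D : Derivation ℤ S S} {φ : S →+* S} {u : Sˣ} {s P : S} (hDq : D q = 0)
    (hDu : D (1 - u) = u) (hφq : φ q = q ^ p) (hφu : φ u = (u : S) ^ p)
    (hs : (1 - (u : S)) * s = 1) (hP : IsWeierstrassExpansion q u s P) :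
    IsUnitMomentSeq p fun n => D^[n + 1] P - (p : S) ^ (n + 2) * φ (D^[n + 1] P) :=
  fun k H hH => Ideal.mem_span_singleton.2 <| hsep k _ fun K => by
    have hp : p.Prime := Fact.out
    have hDu' : D u = -u := by
      rwa [map_sub, D.map_one_eq_zero, zero_sub, neg_eq_iff_eq_neg] at hDu
    have hpk : (p : S) ^ k ∈ Ideal.span {(p : S) ^ k, q ^ K} :=
      Ideal.subset_span (Set.mem_insert _ _)
    have hcongr := depletion_smodEq_sum_zetaMoment hp.pos (derivation_mem_span_pair p q hDq k K)
      (map_mem_span_pair hp.pos hφq k K) hDq hDu' hφq hφu hs hP (a := k + K)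
      (by rw [pow_add]; exact Ideal.mul_mem_right _ _ hpk)
      ((Nat.le_add_left K k).trans (Nat.lt_pow_self hp.one_lt).le)
      (Ideal.subset_span (Set.mem_insert_of_mem _ rfl))
    exact mem_unitMoments_of_smodEq hcongr (shift_mem_unitMoments
      (sum_zetaMoment_mem_unitMoments hpk q u _ K fun d hd => (mem_filter.1 hd).2) 2) H hH

end Tate

/-! ### Expansions in `R⟦q⟧((t))` -/

section Expansion

open Finset

variable (R : Type*) [CommRing R]

/-- The coefficient of `t ^ m` in `d * ((1 - t) ^ d + (1 - t) ^ (-d) - 2)`. -/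
def lambertCoeff (m d : ℕ) : ℤ :=
  d * ((-1) ^ m * (d.choose m : ℤ) + ((d - 1 + m).choose m : ℤ) - if m = 0 then 2 else 0)

/-- The double sum in the expansion of the Weierstrass function, as a series in `t` over `R⟦q⟧`. -/
def lambertSeries : PowerSeries (PowerSeries R) :=
  PowerSeries.mk fun m => PowerSeries.mk fun N =>
    ((∑ d ∈ N.divisors, lambertCoeff m d : ℤ) : R)

/-- The unit `1 - t` of `R⟦t⟧`. -/
def oneSubX : (PowerSeries R)ˣ :=
  ⟨1 - PowerSeries.X, PowerSeries.mk 1,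
    (mul_comm _ _).trans (PowerSeries.mk_one_mul_one_sub_eq_one R),
    PowerSeries.mk_one_mul_one_sub_eq_one R⟩

variable {R}

theorem coeff_one_sub_X_pow (d m : ℕ) :
    PowerSeries.coeff m ((1 - PowerSeries.X : PowerSeries R) ^ d) =
      (-1) ^ m * (d.choose m : R) := by
  have hcomp : (1 - PowerSeries.X : PowerSeries R) ^ d =
      (((1 + Polynomial.X : Polynomial R) ^ d).comp (Polynomial.C (-1) * Polynomial.X) :
        Polynomial R) := by
    simp [sub_eq_add_neg]
  rw [hcomp, Polynomial.coeff_coe, Polynomial.comp_C_mul_X_coeff, Polynomial.coeff_one_add_X_pow,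
    mul_comm]

theorem coeff_natCast_mul_oneSubX_pow (m d : ℕ) :
    PowerSeries.coeff m ((d : PowerSeries R) *
      ((oneSubX R : PowerSeries R) ^ d + (↑(oneSubX R)⁻¹ : PowerSeries R) ^ d - 2)) =
      (lambertCoeff m d : R) := by
  rcases d with _ | d
  · simp [lambertCoeff]
  have hinv : PowerSeries.coeff m ((↑(oneSubX R)⁻¹ : PowerSeries R) ^ (d + 1)) =
      ((d + m).choose m : R) := by
    rw [oneSubX, Units.inv_mk, PowerSeries.mk_one_pow_eq_mk_choose_add, PowerSeries.coeff_mk,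
      Nat.choose_symm_add]
  have htwo : PowerSeries.coeff m (2 : PowerSeries R) = if m = 0 then 2 else 0 := by
    rw [← map_ofNat (PowerSeries.C (R := R)), PowerSeries.coeff_C]
  rw [← map_natCast (PowerSeries.C (R := R)), PowerSeries.coeff_C_mul, map_sub, map_add, hinv,
    htwo, oneSubX, coeff_one_sub_X_pow, lambertCoeff]
  push_cast
  simp

theorem sum_range_sum_Ico_ite {M : Type*} [AddCommMonoid M] {f : ℕ → M} (hf : f 0 = 0) {n K N : ℕ}
    (hn : n < K) (hKN : K ≤ N) :
    ∑ d ∈ range N, ∑ j ∈ Ico 1 K, (if n = j * d then f d else 0) = ∑ d ∈ n.divisors, f d := by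
  rcases eq_or_ne n 0 with rfl | hn0
  · rw [Nat.divisors_zero, sum_empty]
    refine sum_eq_zero fun d _ => sum_eq_zero fun j hj => ?_
    have hj0 : j ≠ 0 := (Nat.one_le_iff_ne_zero).1 (mem_Ico.1 hj).1
    by_cases hd : d = 0 <;> simp [hd, hf, hj0]
  · rw [← sum_product', ← sum_filter, ← Nat.sum_divisorsAntidiagonal fun d _ => f d]
    refine sum_congr ?_ fun _ _ => rfl
    ext ⟨d, j⟩
    simp only [mem_filter, mem_product, mem_range, mem_Ico, Nat.mem_divisorsAntidiagonal]
    constructor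
    · rintro ⟨-, rfl⟩
      exact ⟨mul_comm d j, hn0⟩
    · rintro ⟨rfl, -⟩
      obtain ⟨hd0, hj0⟩ := mul_ne_zero_iff.1 hn0
      have hd := Nat.le_mul_of_pos_right d (Nat.pos_of_ne_zero hj0)
      have hj := Nat.le_mul_of_pos_left j (Nat.pos_of_ne_zero hd0)
      exact ⟨⟨by lia, by lia, by lia⟩, mul_comm d j⟩

theorem powerSeries_C_dvd_iff {a : R} {f : PowerSeries R} :
    PowerSeries.C a ∣ f ↔ ∀ n, a ∣ PowerSeries.coeff n f := by
  refine ⟨?_, fun h => ?_⟩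
  · rintro ⟨g, rfl⟩ n
    exact ⟨_, PowerSeries.coeff_C_mul n g a⟩
  · choose g hg using h
    exact ⟨PowerSeries.mk g, PowerSeries.ext fun n => by
      rw [PowerSeries.coeff_C_mul, PowerSeries.coeff_mk, hg]⟩

theorem hahnSeries_C_dvd_iff {Γ : Type*} [AddCommMonoid Γ] [PartialOrder Γ]
    [IsOrderedCancelAddMonoid Γ] {a : R} {x : HahnSeries Γ R} :
    HahnSeries.C a ∣ x ↔ ∀ n, a ∣ x.coeff n := by
  classical
  refine ⟨?_, fun h => ?_⟩
  · rintro ⟨y, rfl⟩ n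
    exact ⟨y.coeff n, by rw [HahnSeries.C_mul_eq_smul, HahnSeries.coeff_smul, smul_eq_mul]⟩
  · choose y hy using h
    refine ⟨⟨fun n => if x.coeff n = 0 then 0 else y n, x.isPWO_support.mono fun n hn => ?_⟩, ?_⟩
    · exact fun h0 => hn (if_pos h0)
    · ext n
      rw [HahnSeries.C_mul_eq_smul, HahnSeries.coeff_smul, smul_eq_mul]
      by_cases h0 : x.coeff n = 0 <;> simp [h0, ← hy]

theorem C_X_pow_dvd_lambertSeries_sub {K N : ℕ} (hKN : K ≤ N) :
    PowerSeries.C (PowerSeries.X : PowerSeries R) ^ K ∣ lambertSeries R -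
      ∑ d ∈ range N, ∑ j ∈ Ico 1 K, (d : PowerSeries (PowerSeries R)) *
        PowerSeries.C PowerSeries.X ^ (j * d) *
        ((oneSubX (PowerSeries R) : PowerSeries (PowerSeries R)) ^ d +
          (↑(oneSubX (PowerSeries R))⁻¹ : PowerSeries (PowerSeries R)) ^ d - 2) := by
  have hcoeff (m n d j : ℕ) : PowerSeries.coeff n (PowerSeries.coeff m
      ((d : PowerSeries (PowerSeries R)) * PowerSeries.C PowerSeries.X ^ (j * d) *
        ((oneSubX (PowerSeries R) : PowerSeries (PowerSeries R)) ^ d +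
          (↑(oneSubX (PowerSeries R))⁻¹ : PowerSeries (PowerSeries R)) ^ d - 2))) =
      if n = j * d then (lambertCoeff m d : R) else 0 := by
    rw [mul_comm (d : PowerSeries (PowerSeries R)), mul_assoc, ← map_pow, PowerSeries.coeff_C_mul,
      coeff_natCast_mul_oneSubX_pow, ← map_intCast (PowerSeries.C (R := R)), mul_comm,
      PowerSeries.coeff_C_mul, PowerSeries.coeff_X_pow, mul_ite, mul_one, mul_zero]
  rw [← map_pow, powerSeries_C_dvd_iff]
  intro m
  rw [PowerSeries.X_pow_dvd_iff]
  intro n hn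
  simp only [map_sub, map_sum, hcoeff, lambertSeries, PowerSeries.coeff_mk, Int.cast_sum]
  rw [sum_range_sum_Ico_ite (by simp [lambertCoeff]) hn hKN, sub_self]

end Expansion

section Laurent

variable (R : Type*) [CommRing R]

/-- The expansion of the Weierstrass function, up to its constant term `1 / 12`, in `R⟦q⟧((t))`. -/
def weierstrassLaurent : HahnSeries ℤ (PowerSeries R) :=
  HahnSeries.single (-2) 1 - HahnSeries.single (-1) 1 +
    HahnSeries.ofPowerSeries ℤ (PowerSeries R) (lambertSeries R)

/-- The unit `1 - t` of `R⟦q⟧((t))`. -/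
def laurentOneSubT : (HahnSeries ℤ (PowerSeries R))ˣ :=
  Units.map (HahnSeries.ofPowerSeries ℤ (PowerSeries R)) (oneSubX (PowerSeries R))

variable {R}

theorem coe_laurentOneSubT :
    (laurentOneSubT R : HahnSeries ℤ (PowerSeries R)) = 1 - HahnSeries.single 1 1 := by
  simp [laurentOneSubT, oneSubX]

theorem one_sub_laurentOneSubT_mul_single :
    (1 - (laurentOneSubT R : HahnSeries ℤ (PowerSeries R))) * HahnSeries.single (-1) 1 = 1 := by
  rw [coe_laurentOneSubT, sub_sub_cancel, HahnSeries.single_mul_single, mul_one]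
  rfl

theorem isWeierstrassExpansion_laurent :
    IsWeierstrassExpansion (HahnSeries.C (PowerSeries.X : PowerSeries R)) (laurentOneSubT R)
      (HahnSeries.single (-1) 1) (weierstrassLaurent R) := by
  intro K N hKN
  have hpole : (laurentOneSubT R : HahnSeries ℤ (PowerSeries R)) * HahnSeries.single (-1) 1 ^ 2 =
      HahnSeries.single (-2) 1 - HahnSeries.single (-1) 1 := by
    rw [coe_laurentOneSubT, sub_mul, one_mul, sq, HahnSeries.single_mul_single,
      HahnSeries.single_mul_single]
    norm_num
  have hdvd := map_dvd (HahnSeries.ofPowerSeries ℤ (PowerSeries R))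
    (C_X_pow_dvd_lambertSeries_sub (R := R) hKN)
  simp only [map_sub, map_sum, map_mul, map_pow, map_natCast, map_add, map_ofNat,
    HahnSeries.ofPowerSeries_C] at hdvd
  rw [weierstrassLaurent, hpole, add_sub_add_left_eq_sub]
  exact hdvd

theorem laurent_C_C_dvd_of_mem_span {a : R} {x : HahnSeries ℤ (PowerSeries R)}
    (hx : ∀ K, x ∈ Ideal.span {HahnSeries.C (PowerSeries.C a), HahnSeries.C PowerSeries.X ^ K}) :
    HahnSeries.C (PowerSeries.C a) ∣ x := by
  rw [hahnSeries_C_dvd_iff]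
  intro n
  rw [powerSeries_C_dvd_iff]
  intro N
  obtain ⟨y, z, rfl⟩ := Ideal.mem_span_pair.1 (hx (N + 1))
  rw [← map_pow, mul_comm y, mul_comm z, HahnSeries.coeff_add, HahnSeries.C_mul_eq_smul,
    HahnSeries.C_mul_eq_smul, HahnSeries.coeff_smul, HahnSeries.coeff_smul, smul_eq_mul,
    smul_eq_mul, map_add, PowerSeries.coeff_C_mul, PowerSeries.coeff_X_pow_mul', if_neg (by lia),
    add_zero]
  exact dvd_mul_right _ _

end Laurent

/-! ### The `p`-adic completion -/

section Completion

variable {R : Type*} [CommRing R] {a : R}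

theorem adicCompletion_pow_dvd_iff {k : ℕ} {x : AdicCompletion (Ideal.span {a}) R} :
    algebraMap R (AdicCompletion (Ideal.span {a}) R) a ^ k ∣ x ↔
      AdicCompletion.evalₐ (Ideal.span {a}) k x = 0 := by
  have hker : AdicCompletion.evalₐ (Ideal.span {a}) k x = 0 ↔
      AdicCompletion.eval (Ideal.span {a}) R k x = 0 := by
    constructor <;> intro h
    · rw [← AdicCompletion.factor_evalₐ_eq_eval _ x (by simp), h, map_zero]
    · rw [← AdicCompletion.factor_eval_eq_evalₐ _ x (by simp), h, map_zero]
  rw [hker, ← LinearMap.mem_ker,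
    ← AdicCompletion.pow_smul_top_eq_ker_eval (Submodule.fg_span_singleton _),
    Ideal.smul_top_eq_map, Submodule.restrictScalars_mem, Ideal.span_singleton_pow, Ideal.map_span,
    Set.image_singleton, Ideal.mem_span_singleton, map_pow]

theorem adicCompletion_pow_dvd_of_mem_span {b : R} {k : ℕ}
    (hsep : ∀ r, (∀ K, r ∈ Ideal.span {a ^ k, b ^ K}) → a ^ k ∣ r)
    {x : AdicCompletion (Ideal.span {a}) R}
    (hx : ∀ K, x ∈ Ideal.span {algebraMap R (AdicCompletion (Ideal.span {a}) R) a ^ k,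
      algebraMap R (AdicCompletion (Ideal.span {a}) R) b ^ K}) :
    algebraMap R (AdicCompletion (Ideal.span {a}) R) a ^ k ∣ x := by
  obtain ⟨r, hr⟩ := Ideal.Quotient.mk_surjective (AdicCompletion.evalₐ (Ideal.span {a}) k x)
  have hmk (r : R) : Ideal.Quotient.mk (Ideal.span {a} ^ k) r = 0 ↔ a ^ k ∣ r := by
    rw [Ideal.Quotient.eq_zero_iff_mem, Ideal.span_singleton_pow, Ideal.mem_span_singleton]
  rw [adicCompletion_pow_dvd_iff, ← hr, hmk]
  refine hsep r fun K => ?_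
  obtain ⟨y, z, hyz⟩ := Ideal.mem_span_pair.1 (hx K)
  obtain ⟨z', hz'⟩ := Ideal.Quotient.mk_surjective (AdicCompletion.evalₐ (Ideal.span {a}) k z)
  have hrz : Ideal.Quotient.mk (Ideal.span {a} ^ k) (r - z' * b ^ K) = 0 := by
    rw [map_sub, hr, ← hyz, map_add, map_mul, map_mul, adicCompletion_pow_dvd_iff.1 dvd_rfl,
      map_pow, AlgHom.commutes, map_mul, hz', Ideal.Quotient.algebraMap_eq, map_pow, mul_zero,
      zero_add, sub_self]
  obtain ⟨y', hy'⟩ := (hmk _).1 hrz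
  exact Ideal.mem_span_pair.2 ⟨y', z', by linear_combination -hy'⟩

end Completion

theorem exists_derivation_coe_eq {S : Type*} [CommRing S] (D : S → S)
    (hDadd : ∀ x y, D (x + y) = D x + D y) (hDmul : ∀ x y, D (x * y) = x * D y + y * D x) :
    ∃ D' : Derivation ℤ S S, D' = D :=
  ⟨Derivation.mk' (AddMonoidHom.mk' D hDadd).toIntLinearMap hDmul, rfl⟩

section WittenRing

variable (p : ℕ) [Fact p.Prime]

instance isPrecomplete_wittenRing :
    IsPrecomplete (Ideal.span {(p : WittenRing p)}) (WittenRing p) := by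
  have hmap : Ideal.span {(p : WittenRing p)} =
      (Ideal.span {(p : LaurentT p)}).map (algebraMap (LaurentT p) (WittenRing p)) := by
    rw [Ideal.map_span, Set.image_singleton, map_natCast]
  rw [hmap]
  exact (AdicCompletion.isAdicComplete_self _ (Submodule.fg_span_singleton _)).toIsPrecomplete

/-- The unit `1 - t` of the ring `S`. -/
def wittenOneSubT : (WittenRing p)ˣ :=
  Units.map (algebraMap (LaurentT p) (WittenRing p)) (laurentOneSubT ℤ_[p])

theorem coe_wittenOneSubT : (wittenOneSubT p : WittenRing p) = 1 - tElem p := by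
  rw [wittenOneSubT, Units.coe_map, MonoidHom.coe_coe, coe_laurentOneSubT, map_sub, map_one, tElem]

theorem isWeierstrassExpansion_weierstrassPone :
    IsWeierstrassExpansion (qElem p) (wittenOneSubT p)
      (algebraMap (LaurentT p) (WittenRing p) (HahnSeries.single (-1) 1))
      (algebraMap (LaurentT p) (WittenRing p) (weierstrassPone p)) :=
  isWeierstrassExpansion_laurent.map (algebraMap (LaurentT p) (WittenRing p))

variable {p}

theorem natCast_pow_dvd_of_mem_span_qElem (k : ℕ) (x : WittenRing p)
    (hx : ∀ K, x ∈ Ideal.span {(p : WittenRing p) ^ k, qElem p ^ K}) :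
    (p : WittenRing p) ^ k ∣ x := by
  have hC : (p : LaurentT p) ^ k = HahnSeries.C (PowerSeries.C ((p : ℤ_[p]) ^ k)) := by
    rw [map_pow, map_natCast, map_pow, map_natCast]
  rw [← map_natCast (algebraMap (LaurentT p) (WittenRing p))] at hx ⊢
  refine adicCompletion_pow_dvd_of_mem_span (fun r hr => ?_) hx
  rw [hC] at hr ⊢
  exact laurent_C_C_dvd_of_mem_span hr

theorem isUnitMomentSeq_wittenRing {D : WittenRing p → WittenRing p}
    (hDadd : ∀ x y, D (x + y) = D x + D y) (hDmul : ∀ x y, D (x * y) = x * D y + y * D x)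
    (hDq : D (qElem p) = 0) (hDt : D (tElem p) = 1 - tElem p) {φ : WittenRing p →+* WittenRing p}
    (hφq : φ (qElem p) = qElem p ^ p) (hφt : φ (tElem p) = 1 - (1 - tElem p) ^ p) :
    IsUnitMomentSeq p fun n =>
      D^[n + 1] (algebraMap (LaurentT p) (WittenRing p) (weierstrassPone p)) -
        (p : WittenRing p) ^ (n + 2) *
          φ (D^[n + 1] (algebraMap (LaurentT p) (WittenRing p) (weierstrassPone p))) := by
  obtain ⟨D, rfl⟩ := exists_derivation_coe_eq D hDadd hDmul
  refine isUnitMomentSeq_depletion natCast_pow_dvd_of_mem_span_qElem hDq ?_ hφq ?_ ?_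
    (isWeierstrassExpansion_weierstrassPone p)
  · rw [coe_wittenOneSubT, sub_sub_cancel, hDt]
  · rw [coe_wittenOneSubT, map_sub, map_one, hφt, sub_sub_cancel]
  · have h := congrArg (algebraMap (LaurentT p) (WittenRing p))
      (one_sub_laurentOneSubT_mul_single (R := ℤ_[p]))
    rwa [map_mul, map_sub, map_one] at h

end WittenRing

theorem wittenSharp_momentSeq_general (p : ℕ) [Fact p.Prime] {w : ℕ → ℤ_[p]}
    (hw : IsUnitMomentSeq p w) (D : WittenRing p → WittenRing p)
    (hDadd : ∀ x y, D (x + y) = D x + D y) (hDmul : ∀ x y, D (x * y) = x * D y + y * D x)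
    (hDq : D (qElem p) = 0) (hDt : D (tElem p) = 1 - tElem p)
    (φ : WittenRing p →+* WittenRing p)
    (hφq : φ (qElem p) = qElem p ^ p) (hφt : φ (tElem p) = 1 - (1 - tElem p) ^ p) :
    ∃ M0 M1 M2 : WittenRing p,
      IsPadicMomentSeq p (fun n =>
        if n = 0 then M0 else if n = 1 then M1 else if n = 2 then M2
        else
          algebraMap (LaurentT p) (WittenRing p) (algebraMap ℤ_[p] (LaurentT p) (w n)) *
            (D^[n - 2] (algebraMap (LaurentT p) (WittenRing p) (weierstrassPone p)) -
              (p : WittenRing p) ^ (n - 1) *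
                φ (D^[n - 2]
                  (algebraMap (LaurentT p) (WittenRing p) (weierstrassPone p))))) := by
  obtain ⟨y, hy⟩ := IsUnitMomentSeq.exists_extension (m := 3) (M := fun n =>
    D^[n - 2] (algebraMap (LaurentT p) (WittenRing p) (weierstrassPone p)) -
      (p : WittenRing p) ^ (n - 1) *
        φ (D^[n - 2] (algebraMap (LaurentT p) (WittenRing p) (weierstrassPone p))))
    (isUnitMomentSeq_wittenRing hDadd hDmul hDq hDt hφq hφt)
  refine ⟨w 0 • y 0, w 1 • y 1, w 2 • y 2, ?_⟩
  convert (hw.smul hy).isPadicMomentSeq using 2 with n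
  rcases n with _ | _ | _ | n
  · rfl
  · rfl
  · rfl
  · rw [if_neg (by lia), if_neg (by lia), if_neg (by lia), if_neg (by lia), Algebra.smul_def]
    rfl

/-- the Witten♯ moment sequence.  `D` is the derivation `(1−t)·d/dt` of
`S ⊗ ℚ` (corresponding to `(2πi)⁻¹·d/dz`), given here on `S` by its defining algebraic
properties (additivity, Leibniz rule, `D q = 0`, `D t = 1 − t`); since derivations kill
constants, `D^{n−2} P = D^{n−2} (P − 1/12)` for `n ≥ 3`, where `P − 1/12 ∈ S` is the
explicit series `weierstrassPone`.  `φ` is the (continuous) ring endomorphism of `S`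
determined by `φ(q) = q^p` and `φ(t) = 1 − (1−t)^p`.  For `n ≥ 3`,
`M_n = (1 − cⁿ)·(D^{n−2}P − p^{n−1}·φ(D^{n−2}P)) ∈ S`, and there exist `M_0, M_1, M_2 ∈ S`
making `(M_n)` an `S`-valued `p`-adic moment sequence. -/
theorem wittenSharp_momentSeq (p : ℕ) [Fact p.Prime] (c : ℤ_[p]ˣ)
    (hc1 : (c : ℤ_[p]) ≠ 1) (hc2 : (c : ℤ_[p]) ≠ -1)
    (D : WittenRing p → WittenRing p)
    (hDadd : ∀ x y, D (x + y) = D x + D y)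
    (hDmul : ∀ x y, D (x * y) = x * D y + y * D x)
    (hDq : D (qElem p) = 0)
    (hDt : D (tElem p) = 1 - tElem p)
    (φ : WittenRing p →+* WittenRing p)
    (hφq : φ (qElem p) = qElem p ^ p)
    (hφt : φ (tElem p) = 1 - (1 - tElem p) ^ p) :
    ∃ M0 M1 M2 : WittenRing p,
      IsPadicMomentSeq p (fun n =>
        if n = 0 then M0 else if n = 1 then M1 else if n = 2 then M2
        else
          algebraMap (LaurentT p) (WittenRing p)
              (algebraMap ℤ_[p] (LaurentT p) (1 - (c : ℤ_[p]) ^ n)) *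
            (D^[n - 2] (algebraMap (LaurentT p) (WittenRing p) (weierstrassPone p)) -
              (p : WittenRing p) ^ (n - 1) *
                φ (D^[n - 2]
                  (algebraMap (LaurentT p) (WittenRing p) (weierstrassPone p))))) :=
  wittenSharp_momentSeq_general p (isUnitMomentSeq_one_sub_pow c) D hDadd hDmul hDq hDt φ hφq hφt

end
end
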